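/- arXiv:2312.15995 — 3 statements merged into one kernel-verified Lean document; each statement's English description precedes it below -/
import Mathlib

section
/- Upper bound on the largest eigenvalue of the tail kernel matrix. Assume β_k < ∞ for all k, that the eigenvalues are in non-increasing order λ_1 ≥ λ_2 ≥ …, and the regularity assumption holds. Then there exist absolute constants c, c' > 0 such that for every n ≥ 1 and k ≥ 1, with probability at least 1 − 4·(r_k/k⁴)·exp(−(c'/β_k)·(n/r_k)) over X drawn i.i.d. from μ: μ₁((1/n)·K_{>k}) ≤ c·( λ_{k+1} + β_k·log(k+1)·tr(Σ_{>k})/n ). -/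
open MeasureTheory Matrix Filter

noncomputable section

namespace KRRPaper

universe u

variable {𝒳 : Type u}

/-- `tr(Σ_{>k})`, with 0-based indexing (Lean index `i` = paper index `i+1`). -/
def trTail (lam : ℕ → ℝ) (k : ℕ) : ℝ := ∑' i : ℕ, lam (k + i)

/-- `tr(Σ_{>k}²)` -/
def trTailSq (lam : ℕ → ℝ) (k : ℕ) : ℝ := ∑' i : ℕ, (lam (k + i)) ^ 2

/-- `‖Σ_{>k}‖ = sup_{i>k} λ_i` -/
def opTail (lam : ℕ → ℝ) (k : ℕ) : ℝ := ⨆ i : ℕ, lam (k + i)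

/-- effective rank `r_k` -/
def rEff (lam : ℕ → ℝ) (k : ℕ) : ℝ := trTail lam k / opTail lam k

/-- effective rank `R_k` -/
def REff (lam : ℕ → ℝ) (k : ℕ) : ℝ := (trTail lam k) ^ 2 / trTailSq lam k

/-- the function whose essential supremum defines `β_k` -/
def betaF (lam : ℕ → ℝ) (ψ : ℕ → 𝒳 → ℝ) (k : ℕ) (x : 𝒳) : ℝ :=
  max (max ((∑ i ∈ Finset.range k, (ψ i x) ^ 2) / k)
        ((∑' i : ℕ, lam (k + i) * (ψ (k + i) x) ^ 2) / trTail lam k))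
      ((∑' i : ℕ, (lam (k + i)) ^ 2 * (ψ (k + i) x) ^ 2) / trTailSq lam k)

/-- `β_k`, the essential supremum of `betaF` -/
def betaQ [MeasurableSpace 𝒳] (μ : Measure 𝒳) (lam : ℕ → ℝ) (ψ : ℕ → 𝒳 → ℝ) (k : ℕ) : ℝ :=
  essSup (betaF lam ψ k) μ

def alphaF (lam : ℕ → ℝ) (ψ : ℕ → 𝒳 → ℝ) (k : ℕ) (x : 𝒳) : ℝ :=
  (∑' i : ℕ, lam (k + i) * (ψ (k + i) x) ^ 2) / trTail lam k

/-- `α_k`, the essential infimum of `alphaF` -/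
def alphaQ [MeasurableSpace 𝒳] (μ : Measure 𝒳) (lam : ℕ → ℝ) (ψ : ℕ → 𝒳 → ℝ) (k : ℕ) : ℝ :=
  essInf (alphaF lam ψ k) μ

/-- the hypothesis `β_k < ∞` -/
def BetaFinite [MeasurableSpace 𝒳] (μ : Measure 𝒳) (lam : ℕ → ℝ) (ψ : ℕ → 𝒳 → ℝ) (k : ℕ) : Prop :=
  ∃ C : ℝ, ∀ᵐ x ∂μ, betaF lam ψ k x ≤ C

/-- `(ψ_i)` is an orthonormal family in `L²(μ)` -/
def OrthonormalFamily [MeasurableSpace 𝒳] (μ : Measure 𝒳) (ψ : ℕ → 𝒳 → ℝ) : Prop :=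
  (∀ i, MemLp (ψ i) 2 μ) ∧
    ∀ i j, ∫ x, ψ i x * ψ j x ∂μ = if i = j then (1 : ℝ) else 0

/-- the regularity assumption -/
def RegularityAssumption [MeasurableSpace 𝒳] (μ : Measure 𝒳) (lam : ℕ → ℝ)
    (ψ : ℕ → 𝒳 → ℝ) : Prop :=
  (∃ N : ℕ, ∀ i, N ≤ i → lam i = 0) ∨
    ∃ ks : ℕ → ℕ, StrictMono ks ∧
      Tendsto (fun i => betaQ μ lam ψ (ks i) * trTail lam (ks i)) atTop (nhds 0)

/-- the kernel matrix `K` -/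
def kerMat (lam : ℕ → ℝ) (ψ : ℕ → 𝒳 → ℝ) {n : ℕ} (X : Fin n → 𝒳) :
    Matrix (Fin n) (Fin n) ℝ :=
  Matrix.of fun j l => ∑' i : ℕ, lam i * ψ i (X j) * ψ i (X l)

/-- the tail kernel matrix `K_{>k}` -/
def kerMatGT (lam : ℕ → ℝ) (ψ : ℕ → 𝒳 → ℝ) (k : ℕ) {n : ℕ} (X : Fin n → 𝒳) :
    Matrix (Fin n) (Fin n) ℝ :=
  Matrix.of fun j l => ∑' i : ℕ, lam (k + i) * ψ (k + i) (X j) * ψ (k + i) (X l)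

/-- the matrix `M` with entries `∑ᵢ λᵢ² ψᵢ(x_j) ψᵢ(x_l)` -/
def sqKerMat (lam : ℕ → ℝ) (ψ : ℕ → 𝒳 → ℝ) {n : ℕ} (X : Fin n → 𝒳) :
    Matrix (Fin n) (Fin n) ℝ :=
  Matrix.of fun j l => ∑' i : ℕ, (lam i) ^ 2 * ψ i (X j) * ψ i (X l)

/-- `ψ_{≤k}(X)`, the `n × k` design matrix -/
def psiMat (ψ : ℕ → 𝒳 → ℝ) (k : ℕ) {n : ℕ} (X : Fin n → 𝒳) :
    Matrix (Fin n) (Fin k) ℝ :=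
  Matrix.of fun j i => ψ (i : ℕ) (X j)

/-- `eigval M j` is the `j`-th largest eigenvalue (`j` is 1-based) of a real symmetric
matrix `M`; junk value `0` if `M` is not symmetric or `j` is out of range. -/
def eigval {n : ℕ} (M : Matrix (Fin n) (Fin n) ℝ) (j : ℕ) : ℝ := by
  classical
  exact if h : M.IsHermitian then
    if hj : j - 1 < n then
      (h.eigenvalues ∘ ⇑(Tuple.sort h.eigenvalues)) (Fin.rev ⟨j - 1, hj⟩)
    else 0
  else 0

/-- `A = K + nγ_n I` -/
def ridgeMat (lam : ℕ → ℝ) (ψ : ℕ → 𝒳 → ℝ) {n : ℕ} (X : Fin n → 𝒳) (γ : ℝ) :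
    Matrix (Fin n) (Fin n) ℝ :=
  kerMat lam ψ X + ((n : ℝ) * γ) • (1 : Matrix (Fin n) (Fin n) ℝ)

/-- the variance `V = σ_ε² tr(A⁻¹ M A⁻¹)` of kernel ridge regression -/
def varKRR (lam : ℕ → ℝ) (ψ : ℕ → 𝒳 → ℝ) {n : ℕ} (X : Fin n → 𝒳) (γ σ : ℝ) : ℝ :=
  σ ^ 2 * ((ridgeMat lam ψ X γ)⁻¹ * sqKerMat lam ψ X * (ridgeMat lam ψ X γ)⁻¹).trace

/-- the KRR coefficient vector `θ̂(y)` -/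
def thetaHat (lam : ℕ → ℝ) (ψ : ℕ → 𝒳 → ℝ) {n : ℕ} (X : Fin n → 𝒳) (γ : ℝ)
    (y : Fin n → ℝ) (i : ℕ) : ℝ :=
  Real.sqrt (lam i) * ∑ j, ψ i (X j) * ((ridgeMat lam ψ X γ)⁻¹ *ᵥ y) j

/-- the noiseless labels `φ(X)θ*` -/
def labels (lam : ℕ → ℝ) (ψ : ℕ → 𝒳 → ℝ) {n : ℕ} (X : Fin n → 𝒳) (θ : ℕ → ℝ) :
    Fin n → ℝ :=
  fun j => ∑' i : ℕ, Real.sqrt (lam i) * ψ i (X j) * θ i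

/-- the bias `B` of kernel ridge regression -/
def biasKRR (lam : ℕ → ℝ) (ψ : ℕ → 𝒳 → ℝ) {n : ℕ} (X : Fin n → 𝒳) (γ : ℝ) (θ : ℕ → ℝ) : ℝ :=
  ∑' i : ℕ, lam i * (thetaHat lam ψ X γ (labels lam ψ X θ) i - θ i) ^ 2

/-- the concentration coefficient `ρ_{k,n}` -/
def rhoCoef (lam : ℕ → ℝ) (ψ : ℕ → 𝒳 → ℝ) (k : ℕ) {n : ℕ} (X : Fin n → 𝒳) (γ : ℝ) : ℝ :=
  (opTail lam k + eigval ((n : ℝ)⁻¹ • kerMatGT lam ψ k X) 1 + γ) /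
    (eigval ((n : ℝ)⁻¹ • kerMatGT lam ψ k X) n + γ)

/-- the i.i.d. sample measure `μ^{⊗n}` on `Fin n → 𝒳` -/
def iid [MeasurableSpace 𝒳] (μ : Measure 𝒳) (n : ℕ) : Measure (Fin n → 𝒳) :=
  Measure.pi fun _ => μ

/-!
For `S` positive semidefinite and `v ⬝ᵥ v ≤ L`,
`tr e^(S + v vᵀ) ≤ tr e^S + (e^L - 1) / L * vᵀ e^S v`. This is proved term by term in the
exponential series, with a weighted Chebyshev inequality over the eigenvalues of `S` in place of
Golden–Thompson. Averaging over an independent `v` with covariance `diag l`, `l ≤ b`, gives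
`E tr (e^S - 1)` a linear recursion in the sample size, so that it is of order
`(tr l / b) * exp (n * b * (e^L - 1) / L)`: the prefactor is an effective rank and not a dimension.
Since `tr (e^M - 1)` agrees at `Aᵀ A` and `A Aᵀ`, the bound passes from the Gram matrix of finitely
many features to the kernel matrix, and dominated convergence then allows infinitely many features.
Markov's inequality concludes; the summand `log (k + 1)` of the threshold, multiplied by `4`, turns
into the factor `k⁻⁴`.
-/

section SpectralSums

variable {ι : Type*} [Fintype ι]

theorem sum_mul_sum_le_sum_mul_sum_of_monovary {w f g : ι → ℝ} (hw : ∀ i, 0 ≤ w i)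
    (hfg : Monovary f g) :
    (∑ i, w i * f i) * (∑ i, w i * g i) ≤ (∑ i, w i) * ∑ i, w i * (f i * g i) := by
  have hsymm : ∑ i, ∑ j, w i * w j * ((f j - f i) * (g j - g i)) =
      2 * ((∑ i, w i) * ∑ i, w i * (f i * g i) - (∑ i, w i * f i) * ∑ i, w i * g i) := by
    have hexpand : ∀ i j, w i * w j * ((f j - f i) * (g j - g i)) =
        w i * (w j * (f j * g j)) + w i * (f i * g i) * w j
          - w i * f i * (w j * g j) - w i * g i * (w j * f j) := fun i j => by ring
    simp only [hexpand, Finset.sum_sub_distrib, Finset.sum_add_distrib, ← Finset.mul_sum,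
      ← Finset.sum_mul]
    ring
  have hnonneg : 0 ≤ ∑ i, ∑ j, w i * w j * ((f j - f i) * (g j - g i)) :=
    Finset.sum_nonneg fun i _ => Finset.sum_nonneg fun j _ =>
      mul_nonneg (mul_nonneg (hw i) (hw j)) (monovary_iff_forall_mul_nonneg.1 hfg i j)
  linarith

variable [DecidableEq ι] {S : Matrix ι ι ℝ}

theorem trace_cfc (hS : S.IsHermitian) (f : ℝ → ℝ) :
    (cfc f S).trace = ∑ i, f (hS.eigenvalues i) := by
  rw [hS.cfc_eq, IsHermitian.cfc, Unitary.conjStarAlgAut_apply, trace_mul_comm, ← mul_assoc]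
  simp [trace_diagonal]

theorem dotProduct_cfc_mulVec (hS : S.IsHermitian) (f : ℝ → ℝ) (v : ι → ℝ) :
    v ⬝ᵥ (cfc f S *ᵥ v) =
      ∑ i, (v ᵥ* (hS.eigenvectorUnitary : Matrix ι ι ℝ)) i ^ 2 * f (hS.eigenvalues i) := by
  rw [hS.cfc_eq, IsHermitian.cfc, Unitary.conjStarAlgAut_apply, ← mulVec_mulVec, ← mulVec_mulVec,
    dotProduct_mulVec, star_eq_conjTranspose, conjTranspose_eq_transpose_of_trivial,
    mulVec_transpose]
  refine Finset.sum_congr rfl fun i _ => ?_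
  rw [mulVec_diagonal, Function.comp_apply, Function.comp_apply, RCLike.ofReal_real_eq_id, id]
  ring

theorem dotProduct_cfc_mulVec_nonneg (hS : S.IsHermitian) {f : ℝ → ℝ}
    (hf : ∀ i, 0 ≤ f (hS.eigenvalues i)) (v : ι → ℝ) : 0 ≤ v ⬝ᵥ (cfc f S *ᵥ v) := by
  rw [dotProduct_cfc_mulVec hS]
  exact Finset.sum_nonneg fun i _ => mul_nonneg (sq_nonneg _) (hf i)

theorem dotProduct_cfc_mulVec_mul_le (hS : S.IsHermitian) {f g : ℝ → ℝ}
    (hfg : Monovary (f ∘ hS.eigenvalues) (g ∘ hS.eigenvalues)) (v : ι → ℝ) :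
    (v ⬝ᵥ (cfc f S *ᵥ v)) * (v ⬝ᵥ (cfc g S *ᵥ v)) ≤
      (v ⬝ᵥ v) * (v ⬝ᵥ (cfc (fun x => f x * g x) S *ᵥ v)) := by
  have hnorm : v ⬝ᵥ v = ∑ i, (v ᵥ* (hS.eigenvectorUnitary : Matrix ι ι ℝ)) i ^ 2 := by
    have hone := dotProduct_cfc_mulVec hS (fun _ => 1) v
    rwa [cfc_const_one ℝ S hS.isSelfAdjoint, one_mulVec, Finset.sum_congr rfl fun i _ => mul_one _]
      at hone
  rw [dotProduct_cfc_mulVec hS, dotProduct_cfc_mulVec hS, dotProduct_cfc_mulVec hS, hnorm]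
  exact sum_mul_sum_le_sum_mul_sum_of_monovary (fun i => sq_nonneg _) hfg

theorem cfc_add_const_pow (hS : S.IsHermitian) (L : ℝ) (j : ℕ) :
    cfc (fun x : ℝ => (x + L) ^ j) S = (S + L • 1) ^ j := by
  have hS' : IsSelfAdjoint S := hS
  rw [cfc_pow .., cfc_add_const .., cfc_id' .., Algebra.algebraMap_eq_smul_one]

open scoped Matrix.Norms.L2Operator in
theorem cfc_exp_const_mul (hS : S.IsHermitian) (θ : ℝ) :
    cfc (fun x : ℝ => Real.exp (θ * x)) S = NormedSpace.exp (θ • S) := by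
  have hS' : IsSelfAdjoint S := hS
  rw [cfc_comp_const_mul θ Real.exp S, CFC.real_exp_eq_normedSpace_exp (.smul (.all θ) hS')]

end SpectralSums

section RankOneUpdate

variable {ι : Type*} [Fintype ι] [DecidableEq ι] {S : Matrix ι ι ℝ} {v : ι → ℝ} {L : ℝ}

theorem dotProduct_pow_mulVec_mul_le (hS : S.PosSemidef) (hv : v ⬝ᵥ v ≤ L) (a j : ℕ) :
    (v ⬝ᵥ (S ^ a *ᵥ v)) * (v ⬝ᵥ ((S + L • 1) ^ j *ᵥ v)) ≤
      L * (v ⬝ᵥ ((S ^ a * (S + L • 1) ^ j) *ᵥ v)) := by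
  have hS' : IsSelfAdjoint S := hS.1
  have hL : 0 ≤ L := (dotProduct_self_star_nonneg v).trans hv
  have hpow : MonotoneOn (fun x : ℝ => x ^ a) (Set.Ici 0) :=
    fun x hx y _ hxy => pow_le_pow_left₀ hx hxy a
  have hadd : MonotoneOn (fun x : ℝ => (x + L) ^ j) (Set.Ici 0) :=
    fun x hx y _ hxy => pow_le_pow_left₀ (add_nonneg hx hL) (by gcongr) j
  have hmono : Monovary ((fun x => x ^ a) ∘ hS.1.eigenvalues)
      ((fun x => (x + L) ^ j) ∘ hS.1.eigenvalues) := fun p q =>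
    (hpow.monovaryOn hadd) (hS.eigenvalues_nonneg p) (hS.eigenvalues_nonneg q)
  have hnonneg := dotProduct_cfc_mulVec_nonneg hS.1 (f := fun x => x ^ a * (x + L) ^ j)
    (fun i => mul_nonneg (pow_nonneg (hS.eigenvalues_nonneg i) a)
      (pow_nonneg (add_nonneg (hS.eigenvalues_nonneg i) hL) j)) v
  have hcheb := dotProduct_cfc_mulVec_mul_le hS.1 hmono v
  rw [cfc_mul _ _ S, cfc_add_const_pow hS.1, cfc_pow_id S a] at hcheb hnonneg
  exact hcheb.trans (mul_le_mul_of_nonneg_right hv hnonneg)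

theorem dotProduct_pow_mul_rankOneUpdate_pow_mulVec_le (hS : S.PosSemidef) (hv : v ⬝ᵥ v ≤ L)
    (a j : ℕ) :
    v ⬝ᵥ ((S ^ a * (S + vecMulVec v v) ^ j) *ᵥ v) ≤
      v ⬝ᵥ ((S ^ a * (S + L • 1) ^ j) *ᵥ v) := by
  induction j generalizing a with
  | zero => rw [pow_zero, pow_zero]
  | succ j ih =>
    have hzero : v ⬝ᵥ ((S + vecMulVec v v) ^ j *ᵥ v) ≤ v ⬝ᵥ ((S + L • 1) ^ j *ᵥ v) := by
      simpa only [pow_zero, Matrix.one_mul] using ih 0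
    calc v ⬝ᵥ ((S ^ a * (S + vecMulVec v v) ^ (j + 1)) *ᵥ v)
        = v ⬝ᵥ ((S ^ (a + 1) * (S + vecMulVec v v) ^ j) *ᵥ v) +
            (v ⬝ᵥ (S ^ a *ᵥ v)) * (v ⬝ᵥ ((S + vecMulVec v v) ^ j *ᵥ v)) := by
          rw [pow_succ' _ j, pow_succ S, ← Matrix.mul_assoc, Matrix.mul_add, Matrix.add_mul,
            add_mulVec, dotProduct_add, Matrix.mul_assoc (S ^ a) (vecMulVec v v),
            ← mulVec_mulVec v (S ^ a), ← mulVec_mulVec v (vecMulVec v v), vecMulVec_mulVec,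
            mulVec_smul, dotProduct_smul, op_smul_eq_smul, smul_eq_mul,
            mul_comm (v ⬝ᵥ (S ^ a *ᵥ v))]
      _ ≤ v ⬝ᵥ ((S ^ (a + 1) * (S + L • 1) ^ j) *ᵥ v) +
            (v ⬝ᵥ (S ^ a *ᵥ v)) * (v ⬝ᵥ ((S + L • 1) ^ j *ᵥ v)) :=
          add_le_add (ih (a + 1))
            (mul_le_mul_of_nonneg_left hzero ((hS.pow a).dotProduct_mulVec_nonneg v))
      _ ≤ v ⬝ᵥ ((S ^ (a + 1) * (S + L • 1) ^ j) *ᵥ v) +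
            L * (v ⬝ᵥ ((S ^ a * (S + L • 1) ^ j) *ᵥ v)) :=
          add_le_add_right (dotProduct_pow_mulVec_mul_le hS hv a j) _
      _ = v ⬝ᵥ ((S ^ a * (S + L • 1) ^ (j + 1)) *ᵥ v) := by
          rw [pow_succ' _ j, pow_succ S, ← Matrix.mul_assoc, Matrix.mul_add, Matrix.add_mul,
            add_mulVec, dotProduct_add, mul_smul_comm, Matrix.mul_one, smul_mul_assoc, smul_mulVec,
            dotProduct_smul, smul_eq_mul]

theorem trace_pow_mul_rankOneUpdate_pow_le (hS : S.PosSemidef) (hv : v ⬝ᵥ v ≤ L) (a j : ℕ) :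
    L * (S ^ a * (S + vecMulVec v v) ^ j).trace ≤
      L * (S ^ (a + j)).trace + v ⬝ᵥ ((S ^ a * ((S + L • 1) ^ j - S ^ j)) *ᵥ v) := by
  have hL : 0 ≤ L := (dotProduct_self_star_nonneg v).trans hv
  induction j generalizing a with
  | zero => simp
  | succ j ih =>
    calc L * (S ^ a * (S + vecMulVec v v) ^ (j + 1)).trace
        = L * (S ^ (a + 1) * (S + vecMulVec v v) ^ j).trace +
            L * (v ⬝ᵥ ((S ^ a * (S + vecMulVec v v) ^ j) *ᵥ v)) := by
          rw [pow_succ _ j, pow_succ' S, ← Matrix.mul_assoc, Matrix.mul_add, trace_add,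
            mul_vecMulVec, trace_vecMulVec, dotProduct_comm, trace_mul_comm _ S, Matrix.mul_assoc,
            mul_add]
      _ ≤ L * (S ^ (a + 1 + j)).trace +
            v ⬝ᵥ ((S ^ (a + 1) * ((S + L • 1) ^ j - S ^ j)) *ᵥ v) +
            L * (v ⬝ᵥ ((S ^ a * (S + L • 1) ^ j) *ᵥ v)) :=
          add_le_add (ih (a + 1)) (mul_le_mul_of_nonneg_left
            (dotProduct_pow_mul_rankOneUpdate_pow_mulVec_le hS hv a j) hL)
      _ = L * (S ^ (a + (j + 1))).trace +
            v ⬝ᵥ ((S ^ a * ((S + L • 1) ^ (j + 1) - S ^ (j + 1))) *ᵥ v) := by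
          have hsplit : S ^ a * ((S + L • 1) ^ (j + 1) - S ^ (j + 1)) =
              S ^ (a + 1) * ((S + L • 1) ^ j - S ^ j) + L • (S ^ a * (S + L • 1) ^ j) := by
            rw [pow_succ' _ j, pow_succ' _ j, pow_succ S a, Matrix.add_mul, smul_mul_assoc,
              Matrix.one_mul, ← mul_smul_comm, Matrix.mul_assoc, ← Matrix.mul_add]
            congr 1
            rw [Matrix.mul_sub]
            abel
          rw [hsplit, add_mulVec, dotProduct_add, smul_mulVec, dotProduct_smul, smul_eq_mul,
            add_right_comm a, add_assoc a, add_assoc]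

open scoped Matrix.Norms.Operator in
theorem hasSum_trace_pow_mul (M B : Matrix ι ι ℝ) :
    HasSum (fun p : ℕ => (M ^ p * B).trace / p.factorial) ((NormedSpace.exp M * B).trace) := by
  have hcont : Continuous fun N : Matrix ι ι ℝ => (N * B).trace := by fun_prop
  refine ((NormedSpace.exp_series_hasSum_exp' (𝕂 := ℝ) M).map
    ((Matrix.traceAddMonoidHom ι ℝ).comp (AddMonoidHom.mulRight B)) hcont).congr_fun fun p => ?_
  simp [div_eq_inv_mul]

open scoped Matrix.Norms.Operator in
theorem exp_add_smul_one (M : Matrix ι ι ℝ) (L : ℝ) :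
    NormedSpace.exp (M + L • 1) = Real.exp L • NormedSpace.exp M := by
  have hscalar : NormedSpace.exp (L • (1 : Matrix ι ι ℝ)) = Real.exp L • 1 := by
    rw [← Algebra.algebraMap_eq_smul_one, ← Algebra.algebraMap_eq_smul_one, Real.exp_eq_exp_ℝ]
    exact (NormedSpace.algebraMap_exp_comm L).symm
  rw [Matrix.exp_add_of_commute _ _ ((Commute.one_right M).smul_right L), hscalar,
    mul_smul_comm, Matrix.mul_one]

theorem trace_exp_rankOneUpdate_le (hS : S.PosSemidef) (hv : v ⬝ᵥ v ≤ L) :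
    L * (NormedSpace.exp (S + vecMulVec v v)).trace ≤ L * (NormedSpace.exp S).trace +
      (Real.exp L - 1) * (v ⬝ᵥ (NormedSpace.exp S *ᵥ v)) := by
  have hquad : ∀ M : Matrix ι ι ℝ, v ⬝ᵥ (M *ᵥ v) = (M * vecMulVec v v).trace := fun M => by
    rw [mul_vecMulVec, trace_vecMulVec, dotProduct_comm]
  have hterm : ∀ p : ℕ, L * ((S + vecMulVec v v) ^ p).trace ≤ L * (S ^ p).trace +
      (((S + L • 1) ^ p * vecMulVec v v).trace - (S ^ p * vecMulVec v v).trace) := fun p => by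
    have := trace_pow_mul_rankOneUpdate_pow_le hS hv 0 p
    rwa [pow_zero, Matrix.one_mul, Matrix.one_mul, zero_add, hquad, Matrix.sub_mul, trace_sub]
      at this
  have hlhs := (hasSum_trace_pow_mul (S + vecMulVec v v) 1).mul_left L
  have hrhs := ((hasSum_trace_pow_mul S 1).mul_left L).add
    ((hasSum_trace_pow_mul (S + L • 1) (vecMulVec v v)).sub
      (hasSum_trace_pow_mul S (vecMulVec v v)))
  simp only [Matrix.mul_one] at hlhs hrhs
  have hle := hasSum_le (fun p => ?_) hlhs hrhs
  · rwa [exp_add_smul_one, Matrix.smul_mul, trace_smul, smul_eq_mul, ← hquad, ← sub_one_mul] at hle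
  · rw [← mul_div_assoc, ← mul_div_assoc, ← sub_div, ← add_div]
    exact div_le_div_of_nonneg_right (hterm p) (Nat.cast_nonneg _)

end RankOneUpdate

section TraceExpSubOne

/-- The trace functional `tr (e ^ M - 1)`. Subtracting the identity makes it independent of the
ambient dimension: it takes the same value at `A * B` and `B * A`. -/
def traceExpSubOne {ι : Type*} [Fintype ι] [DecidableEq ι] (M : Matrix ι ι ℝ) : ℝ :=
  (NormedSpace.exp M - 1).trace

variable {ι : Type*} [Fintype ι] [DecidableEq ι] {S : Matrix ι ι ℝ}

@[simp]
theorem traceExpSubOne_zero : traceExpSubOne (0 : Matrix ι ι ℝ) = 0 := by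
  rw [traceExpSubOne, NormedSpace.exp_zero, sub_self, trace_zero]

open scoped Matrix.Norms.Operator in
theorem continuous_traceExpSubOne : Continuous (traceExpSubOne : Matrix ι ι ℝ → ℝ) := by
  have hexp : Continuous (NormedSpace.exp : Matrix ι ι ℝ → Matrix ι ι ℝ) :=
    NormedSpace.exp_continuous
  exact (hexp.sub continuous_const).matrix_trace

theorem cfc_exp_const_mul_sub_one (hS : S.IsHermitian) (θ : ℝ) :
    cfc (fun x : ℝ => Real.exp (θ * x) - 1) S = NormedSpace.exp (θ • S) - 1 := by
  have hS' : IsSelfAdjoint S := hS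
  rw [cfc_sub .., cfc_const_one ℝ S, cfc_exp_const_mul hS]

theorem traceExpSubOne_smul_eq_sum (hS : S.IsHermitian) (θ : ℝ) :
    traceExpSubOne (θ • S) = ∑ i, (Real.exp (θ * hS.eigenvalues i) - 1) := by
  rw [traceExpSubOne, ← cfc_exp_const_mul_sub_one hS, trace_cfc hS]

theorem exp_sub_one_apply_self_nonneg (hS : S.PosSemidef) (i : ι) :
    0 ≤ (NormedSpace.exp S - 1) i i := by
  have h := dotProduct_cfc_mulVec_nonneg hS.1 (f := fun x => Real.exp (1 * x) - 1)
    (fun j => sub_nonneg.2 (Real.one_le_exp (by simpa using hS.eigenvalues_nonneg j)))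
    (Pi.single i 1)
  rwa [cfc_exp_const_mul_sub_one hS.1, one_smul, mulVec_single_one, single_one_dotProduct,
    col_apply] at h

theorem traceExpSubOne_nonneg (hS : S.PosSemidef) : 0 ≤ traceExpSubOne S :=
  Finset.sum_nonneg fun i _ => exp_sub_one_apply_self_nonneg hS i

theorem trace_mul_pow_succ_comm {κ : Type*} [Fintype κ] [DecidableEq κ] (A : Matrix ι κ ℝ)
    (B : Matrix κ ι ℝ) (p : ℕ) : ((A * B) ^ (p + 1)).trace = ((B * A) ^ (p + 1)).trace := by
  have hshift : (A * B) ^ (p + 1) = A * (B * A) ^ p * B := by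
    induction p with
    | zero => simp
    | succ p ih => rw [pow_succ, ih, pow_succ _ p]; simp only [Matrix.mul_assoc]
  rw [hshift, trace_mul_comm, ← Matrix.mul_assoc, pow_succ']

theorem hasSum_traceExpSubOne (M : Matrix ι ι ℝ) :
    HasSum (fun p : ℕ => (M ^ (p + 1)).trace / (p + 1).factorial) (traceExpSubOne M) := by
  have hsum := hasSum_trace_pow_mul M 1
  simp only [Matrix.mul_one] at hsum
  simpa [traceExpSubOne] using (hasSum_nat_add_iff' 1).2 hsum

theorem traceExpSubOne_mul_comm {κ : Type*} [Fintype κ] [DecidableEq κ] (A : Matrix ι κ ℝ)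
    (B : Matrix κ ι ℝ) : traceExpSubOne (A * B) = traceExpSubOne (B * A) :=
  (hasSum_traceExpSubOne (A * B)).unique
    ((hasSum_traceExpSubOne (B * A)).congr_fun fun p => by rw [trace_mul_pow_succ_comm])

theorem traceExpSubOne_rankOneUpdate_le {v : ι → ℝ} {L : ℝ} (hS : S.PosSemidef) (hL : 0 < L)
    (hv : v ⬝ᵥ v ≤ L) :
    traceExpSubOne (S + vecMulVec v v) ≤
      traceExpSubOne S + (Real.exp L - 1) / L * (v ⬝ᵥ (NormedSpace.exp S *ᵥ v)) := by
  have h := trace_exp_rankOneUpdate_le hS hv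
  rw [traceExpSubOne, traceExpSubOne, trace_sub, trace_sub, sub_add_eq_add_sub]
  gcongr
  rw [← mul_le_mul_iff_right₀ hL]
  field_simp
  linarith

theorem exp_mul_eigval_one_sub_one_le {n : ℕ} {M : Matrix (Fin n) (Fin n) ℝ} (hn : 0 < n)
    (hM : M.PosSemidef) {θ : ℝ} (hθ : 0 ≤ θ) :
    Real.exp (θ * eigval M 1) - 1 ≤ traceExpSubOne (θ • M) := by
  obtain ⟨i, hi⟩ : ∃ i, eigval M 1 = hM.1.eigenvalues i := by
    rw [eigval, dif_pos hM.1, dif_pos (by simpa using hn)]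
    exact ⟨_, rfl⟩
  rw [traceExpSubOne_smul_eq_sum hM.1, hi]
  exact Finset.single_le_sum (f := fun i => Real.exp (θ * hM.1.eigenvalues i) - 1) (fun j _ =>
    sub_nonneg.2 (Real.one_le_exp (mul_nonneg hθ (hM.eigenvalues_nonneg j)))) (Finset.mem_univ i)

end TraceExpSubOne

section EmpiricalGram

theorem integrable_comp_of_ae_mem_isCompact {Ω E F : Type*} [MeasurableSpace Ω]
    [TopologicalSpace E] [NormedAddCommGroup F] {μ : Measure Ω} [IsFiniteMeasure μ] {f : E → F}
    (hf : Continuous f) {X : Ω → E} (hX : AEStronglyMeasurable X μ) {s : Set E} (hs : IsCompact s)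
    (hXs : ∀ᵐ ω ∂μ, X ω ∈ s) : Integrable (fun ω => f (X ω)) μ := by
  obtain ⟨C, hC⟩ := hs.exists_bound_of_continuousOn hf.continuousOn
  exact .of_bound (hf.comp_aestronglyMeasurable hX) C (hXs.mono fun ω hω => hC _ hω)

variable {ι : Type*} [Fintype ι]

theorem ae_pi_forall_of_ae {κ E : Type*} [Fintype κ] [MeasurableSpace E] {ν : Measure E}
    [SigmaFinite ν] {p : E → Prop} (hp : ∀ᵐ y ∂ν, p y) :
    ∀ᵐ Y ∂Measure.pi (fun _ : κ => ν), ∀ j, p (Y j) :=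
  eventually_all.2 fun j => (Measure.quasiMeasurePreserving_eval (fun _ => ν) j).ae hp

theorem integral_pi_fin_succ {E : Type*} [MeasurableSpace E] {ν : Measure E} [SigmaFinite ν]
    {n : ℕ} {F : (Fin (n + 1) → E) → ℝ} (hF : Integrable F (Measure.pi fun _ => ν)) :
    ∫ Y, F Y ∂Measure.pi (fun _ => ν) =
      ∫ Y, ∫ y, F (Fin.cons y Y) ∂ν ∂Measure.pi (fun _ : Fin n => ν) := by
  have hsplit := (measurePreserving_piFinSuccAbove (fun _ : Fin (n + 1) => ν) 0).symm
  have hcons : ∀ z : E × (Fin n → E),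
      (MeasurableEquiv.piFinSuccAbove (fun _ => E) 0).symm z = Fin.cons z.1 z.2 := fun z =>
    Fin.insertNth_zero' z.1 z.2
  have hint := (hsplit.integrable_comp_emb (MeasurableEquiv.measurableEmbedding _)).2 hF
  simp only [Function.comp_def, hcons] at hint
  rw [← hsplit.integral_comp']
  simp only [hcons]
  exact integral_prod_symm _ hint

theorem gram_cons {ι : Type*} {n : ℕ} (v : ι → ℝ) (Y : Fin n → ι → ℝ) :
    (of (Fin.cons v Y : Fin (n + 1) → ι → ℝ))ᵀ * of (Fin.cons v Y : Fin (n + 1) → ι → ℝ) =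
      (of Y)ᵀ * of Y + vecMulVec v v := by
  ext i j
  simp only [Matrix.mul_apply, Fin.sum_univ_succ, transpose_apply, of_apply, Fin.cons_zero,
    Fin.cons_succ, Matrix.add_apply, vecMulVec_apply, add_comm]

theorem isCompact_setOf_dotProduct_self_le (L : ℝ) : IsCompact {v : ι → ℝ | v ⬝ᵥ v ≤ L} := by
  refine (isCompact_univ_pi fun _ : ι => isCompact_Icc (a := -√L) (b := √L)).of_isClosed_subset
    (isClosed_le (by fun_prop) continuous_const) fun v hv i _ => ?_
  refine abs_le.1 (Real.abs_le_sqrt ?_)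
  rw [sq]
  exact (Finset.single_le_sum (fun j _ => mul_self_nonneg (v j)) (Finset.mem_univ i)).trans hv

variable [DecidableEq ι] {ν : Measure (ι → ℝ)} {l : ι → ℝ} {L b : ℝ}

theorem integral_dotProduct_mulVec (hint : ∀ i j, Integrable (fun v : ι → ℝ => v i * v j) ν)
    (hcov : ∀ i j, ∫ v, v i * v j ∂ν = diagonal l i j) (M : Matrix ι ι ℝ) :
    ∫ v, v ⬝ᵥ (M *ᵥ v) ∂ν = ∑ i, l i * M i i := by
  have hexpand : ∀ v : ι → ℝ, v ⬝ᵥ (M *ᵥ v) = ∑ i, ∑ j, v i * v j * M i j := fun v => by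
    simp only [dotProduct, mulVec, Finset.mul_sum]
    exact Finset.sum_congr rfl fun i _ => Finset.sum_congr rfl fun j _ => by ring
  have hint' : ∀ i j, Integrable (fun v : ι → ℝ => v i * v j * M i j) ν := fun i j =>
    (hint i j).mul_const _
  calc ∫ v, v ⬝ᵥ (M *ᵥ v) ∂ν = ∑ i, ∑ j, diagonal l i j * M i j := by
        simp_rw [hexpand, ← hcov, ← integral_mul_const]
        rw [integral_finsetSum _ fun i _ => integrable_finsetSum _ fun j _ => hint' i j]
        exact Finset.sum_congr rfl fun i _ => integral_finsetSum _ fun j _ => hint' i j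
    _ = ∑ i, l i * M i i := by
        simp only [diagonal_apply, ite_mul, zero_mul, Finset.sum_ite_eq, Finset.mem_univ, if_true]

variable [IsProbabilityMeasure ν]

theorem integral_traceExpSubOne_rankOneUpdate_le {S : Matrix ι ι ℝ} (hS : S.PosSemidef)
    (hL : 0 < L) (hbound : ∀ᵐ v ∂ν, v ⬝ᵥ v ≤ L)
    (hcov : ∀ i j, ∫ v, v i * v j ∂ν = diagonal l i j) (hl : ∀ i, l i ≤ b) :
    ∫ v, traceExpSubOne (S + vecMulVec v v) ∂ν ≤
      (1 + b * ((Real.exp L - 1) / L)) * traceExpSubOne S +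
        (∑ i, l i) * ((Real.exp L - 1) / L) := by
  have hint : ∀ {f : (ι → ℝ) → ℝ}, Continuous f → Integrable f ν := fun hf =>
    integrable_comp_of_ae_mem_isCompact hf aestronglyMeasurable_id
      (isCompact_setOf_dotProduct_self_le L) hbound
  have hg : 0 ≤ (Real.exp L - 1) / L := div_nonneg (by linarith [Real.add_one_le_exp L]) hL.le
  have hquad : ∑ i, l i * NormedSpace.exp S i i ≤ (∑ i, l i) + b * traceExpSubOne S := by
    have hdiag : ∀ i, l i * NormedSpace.exp S i i ≤ l i + b * (NormedSpace.exp S - 1) i i := by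
      intro i
      have := mul_le_mul_of_nonneg_right (hl i) (exp_sub_one_apply_self_nonneg hS i)
      rw [Matrix.sub_apply, one_apply_eq] at this ⊢
      linarith
    calc _ ≤ _ := Finset.sum_le_sum fun i _ => hdiag i
      _ = _ := by rw [Finset.sum_add_distrib, ← Finset.mul_sum]; rfl
  calc ∫ v, traceExpSubOne (S + vecMulVec v v) ∂ν
      ≤ ∫ v, (traceExpSubOne S +
          (Real.exp L - 1) / L * (v ⬝ᵥ (NormedSpace.exp S *ᵥ v))) ∂ν :=
        integral_mono_ae (hint (continuous_traceExpSubOne.comp (by fun_prop))) (hint (by fun_prop))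
          (hbound.mono fun v hv => traceExpSubOne_rankOneUpdate_le hS hL hv)
    _ = traceExpSubOne S + (Real.exp L - 1) / L * ∑ i, l i * NormedSpace.exp S i i := by
        rw [integral_add (integrable_const _) (hint (by fun_prop)), integral_const_mul,
          integral_dotProduct_mulVec (fun i j => hint (by fun_prop)) hcov, integral_const,
          probReal_univ, one_smul]
    _ ≤ traceExpSubOne S + (Real.exp L - 1) / L * ((∑ i, l i) + b * traceExpSubOne S) := by
        gcongr
    _ = _ := by ring

theorem integrable_traceExpSubOne_gram (hbound : ∀ᵐ v ∂ν, v ⬝ᵥ v ≤ L) (n : ℕ) :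
    Integrable (fun Y : Fin n → ι → ℝ => traceExpSubOne ((of Y)ᵀ * of Y))
      (Measure.pi fun _ => ν) :=
  integrable_comp_of_ae_mem_isCompact
    (f := fun Y : Fin n → ι → ℝ => traceExpSubOne ((of Y)ᵀ * of Y))
    (continuous_traceExpSubOne.comp (by fun_prop)) aestronglyMeasurable_id
    (isCompact_univ_pi fun _ => isCompact_setOf_dotProduct_self_le L)
    ((ae_pi_forall_of_ae hbound).mono fun _ hY j _ => hY j)

theorem integral_traceExpSubOne_gram_le (hL : 0 < L) (hbound : ∀ᵐ v ∂ν, v ⬝ᵥ v ≤ L)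
    (hcov : ∀ i j, ∫ v, v i * v j ∂ν = diagonal l i j) (hb : 0 ≤ b) (hl : ∀ i, l i ≤ b) (n : ℕ) :
    b * ∫ Y : Fin n → ι → ℝ, traceExpSubOne ((of Y)ᵀ * of Y) ∂Measure.pi (fun _ => ν) ≤
      (∑ i, l i) * ((1 + b * ((Real.exp L - 1) / L)) ^ n - 1) := by
  set g := (Real.exp L - 1) / L
  have hg0 : 0 ≤ g := div_nonneg (by linarith [Real.add_one_le_exp L]) hL.le
  induction n with
  | zero =>
    have hgram : ∀ Y : Fin 0 → ι → ℝ, (of Y)ᵀ * of Y = 0 := fun Y => by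
      ext i j
      simp only [Matrix.mul_apply, Finset.univ_eq_empty, Finset.sum_empty, Matrix.zero_apply]
    simp only [hgram, traceExpSubOne_zero, integral_zero, pow_zero, sub_self, mul_zero, le_refl]
  | succ n ih =>
    have hint := integrable_traceExpSubOne_gram hbound
    calc b * ∫ Y : Fin (n + 1) → ι → ℝ, traceExpSubOne ((of Y)ᵀ * of Y)
            ∂Measure.pi (fun _ => ν)
        = b * ∫ Y : Fin n → ι → ℝ, ∫ v, traceExpSubOne ((of Y)ᵀ * of Y + vecMulVec v v) ∂ν
            ∂Measure.pi (fun _ => ν) := by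
          rw [integral_pi_fin_succ (hint _)]
          simp only [gram_cons]
      _ ≤ b * ∫ Y : Fin n → ι → ℝ, ((1 + b * g) * traceExpSubOne ((of Y)ᵀ * of Y) +
            (∑ i, l i) * g) ∂Measure.pi (fun _ => ν) := by
          refine mul_le_mul_of_nonneg_left (integral_mono_of_nonneg (ae_of_all _ fun Y => ?_)
            (((hint n).const_mul _).add (integrable_const _)) (ae_of_all _ fun Y => ?_)) hb
          · exact integral_nonneg fun v => traceExpSubOne_nonneg
              ((posSemidef_conjTranspose_mul_self (of Y)).add (posSemidef_vecMulVec_self_star v))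
          · exact integral_traceExpSubOne_rankOneUpdate_le
              (posSemidef_conjTranspose_mul_self (of Y)) hL hbound hcov hl
      _ = (1 + b * g) * (b * ∫ Y : Fin n → ι → ℝ, traceExpSubOne ((of Y)ᵀ * of Y)
            ∂Measure.pi (fun _ => ν)) + b * ((∑ i, l i) * g) := by
          rw [integral_add ((hint n).const_mul _) (integrable_const _),
            integral_const_mul, integral_const, probReal_univ, one_smul]
          ring
      _ ≤ (1 + b * g) * ((∑ i, l i) * ((1 + b * g) ^ n - 1)) + b * ((∑ i, l i) * g) := by
          gcongr
      _ = (∑ i, l i) * ((1 + b * g) ^ (n + 1) - 1) := by ring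

end EmpiricalGram

section KernelMatrix

/-- The kernel matrix of the sample `X` for the features `V`; it takes the junk value `0` in the
entries where the series diverges. -/
def kernelMatrix {Ω ι : Type*} (V : ι → Ω → ℝ) {n : ℕ} (X : Fin n → Ω) :
    Matrix (Fin n) (Fin n) ℝ :=
  of fun j m => ∑' i, V i (X j) * V i (X m)

variable {Ω ι : Type*} {V : ι → Ω → ℝ} {n : ℕ} {X : Fin n → Ω}

theorem norm_mul_le_half_add_sq (x y : ℝ) : ‖x * y‖ ≤ (x ^ 2 + y ^ 2) / 2 := by
  rw [Real.norm_eq_abs, abs_mul, ← sq_abs x, ← sq_abs y]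
  linarith [two_mul_le_add_sq |x| |y|]

theorem summable_mul_of_summable_sq {f g : ι → ℝ} (hf : Summable fun i => f i ^ 2)
    (hg : Summable fun i => g i ^ 2) : Summable fun i => f i * g i :=
  ((hf.add hg).div_const 2).of_norm_bounded fun i => norm_mul_le_half_add_sq (f i) (g i)

theorem abs_tsum_mul_le {f g : ι → ℝ} {L : ℝ} (hf : Summable fun i => f i ^ 2)
    (hg : Summable fun i => g i ^ 2) (hfL : ∑' i, f i ^ 2 ≤ L) (hgL : ∑' i, g i ^ 2 ≤ L) :
    |∑' i, f i * g i| ≤ L :=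
  calc |∑' i, f i * g i| ≤ (∑' i, f i ^ 2 + ∑' i, g i ^ 2) / 2 :=
        tsum_of_norm_bounded ((hf.hasSum.add hg.hasSum).div_const 2) fun i =>
          norm_mul_le_half_add_sq (f i) (g i)
    _ ≤ L := by linarith

theorem tendsto_kernelMatrix_finset (hX : ∀ j, Summable fun i => V i (X j) ^ 2) :
    Tendsto (fun s : Finset ι => kernelMatrix (fun i : s => V i) X) atTop
      (nhds (kernelMatrix V X)) := by
  refine tendsto_pi_nhds.2 fun j => tendsto_pi_nhds.2 fun m => ?_
  refine (summable_mul_of_summable_sq (hX j) (hX m)).hasSum.congr fun s => ?_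
  exact (Finset.tsum_subtype s fun i => V i (X j) * V i (X m)).symm

theorem kernelMatrix_eq_mul_transpose [Fintype ι] :
    kernelMatrix V X = (of fun j i => V i (X j)) * (of fun j i => V i (X j))ᵀ := by
  ext j m
  simp only [kernelMatrix, of_apply, tsum_fintype, Matrix.mul_apply, transpose_apply]

theorem posSemidef_kernelMatrix (hX : ∀ j, Summable fun i => V i (X j) ^ 2) :
    (kernelMatrix V X).PosSemidef := by
  have hfin : ∀ s : Finset ι, (kernelMatrix (fun i : s => V i) X).PosSemidef := fun s => by
    rw [kernelMatrix_eq_mul_transpose]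
    exact posSemidef_self_mul_conjTranspose _
  refine .of_dotProduct_mulVec_nonneg ?_ fun u => ?_
  · ext j m
    simp only [kernelMatrix, conjTranspose_apply, of_apply, star_trivial, mul_comm]
  · have hquad : Continuous fun M : Matrix (Fin n) (Fin n) ℝ => star u ⬝ᵥ (M *ᵥ u) := by fun_prop
    exact ge_of_tendsto' ((hquad.tendsto _).comp (tendsto_kernelMatrix_finset hX)) fun s =>
      (hfin s).dotProduct_mulVec_nonneg u

theorem kernelMatrix_const_mul (c : ℝ) :
    kernelMatrix (fun i x => c * V i x) X = c ^ 2 • kernelMatrix V X := by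
  ext j m
  rw [Matrix.smul_apply, kernelMatrix, kernelMatrix, of_apply, of_apply, smul_eq_mul,
    ← tsum_mul_left]
  exact tsum_congr fun i => by ring

theorem isCompact_setOf_abs_apply_le (L : ℝ) :
    IsCompact {M : Matrix (Fin n) (Fin n) ℝ | ∀ j m, |M j m| ≤ L} := by
  have hpi : {M : Matrix (Fin n) (Fin n) ℝ | ∀ j m, |M j m| ≤ L} =
      Set.univ.pi fun _ => Set.univ.pi fun _ => Set.Icc (-L) L := by
    ext M
    exact ⟨fun h j _ m _ => abs_le.1 (h j m), fun h j m => abs_le.2 (h j trivial m trivial)⟩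
  rw [hpi]
  exact isCompact_univ_pi fun _ => isCompact_univ_pi fun _ => isCompact_Icc

variable [MeasurableSpace Ω] {μ : Measure Ω} {L : ℝ}

section SigmaFinite

variable [SigmaFinite μ]

theorem aemeasurable_sample_features [Countable ι] (hV : ∀ i, AEMeasurable (V i) μ) (n : ℕ) :
    AEMeasurable (fun (X : Fin n → Ω) j i => V i (X j)) (Measure.pi fun _ => μ) :=
  aemeasurable_pi_lambda _ fun j => aemeasurable_pi_lambda _ fun i =>
    (hV i).comp_quasiMeasurePreserving (Measure.quasiMeasurePreserving_eval (fun _ => μ) j)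

theorem aestronglyMeasurable_kernelMatrix_of_finite [Finite ι] (hV : ∀ i, AEMeasurable (V i) μ)
    (n : ℕ) :
    AEStronglyMeasurable (fun X : Fin n → Ω => kernelMatrix V X) (Measure.pi fun _ => μ) := by
  have := Fintype.ofFinite ι
  have hcont : Continuous fun Y : Fin n → ι → ℝ => of Y * (of Y)ᵀ := by fun_prop
  simp only [kernelMatrix_eq_mul_transpose]
  exact hcont.comp_aestronglyMeasurable (aemeasurable_sample_features hV n).aestronglyMeasurable

theorem aestronglyMeasurable_kernelMatrix [Countable ι] (hV : ∀ i, AEMeasurable (V i) μ)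
    (hsum : ∀ᵐ x ∂μ, Summable fun i => V i x ^ 2) (n : ℕ) :
    AEStronglyMeasurable (fun X : Fin n → Ω => kernelMatrix V X) (Measure.pi fun _ => μ) := by
  have : TopologicalSpace.PseudoMetrizableSpace (Matrix (Fin n) (Fin n) ℝ) :=
    inferInstanceAs (TopologicalSpace.PseudoMetrizableSpace (Fin n → Fin n → ℝ))
  exact aestronglyMeasurable_of_tendsto_ae atTop
    (fun s : Finset ι => aestronglyMeasurable_kernelMatrix_of_finite (fun i : s => hV i) n)
    ((ae_pi_forall_of_ae hsum).mono fun _ hX => tendsto_kernelMatrix_finset hX)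

theorem ae_abs_kernelMatrix_apply_le
    (hbound : ∀ᵐ x ∂μ, (Summable fun i => V i x ^ 2) ∧ ∑' i, V i x ^ 2 ≤ L) (n : ℕ) :
    ∀ᵐ X ∂Measure.pi (fun _ : Fin n => μ), ∀ j m, |kernelMatrix V X j m| ≤ L :=
  (ae_pi_forall_of_ae hbound).mono fun _ hX j m =>
    abs_tsum_mul_le (hX j).1 (hX m).1 (hX j).2 (hX m).2

end SigmaFinite

section FiniteMeasure

variable [IsFiniteMeasure μ]

theorem integrable_comp_kernelMatrix [Countable ι] (hV : ∀ i, AEMeasurable (V i) μ)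
    (hbound : ∀ᵐ x ∂μ, (Summable fun i => V i x ^ 2) ∧ ∑' i, V i x ^ 2 ≤ L) {n : ℕ}
    {f : Matrix (Fin n) (Fin n) ℝ → ℝ} (hf : Continuous f) :
    Integrable (fun X : Fin n → Ω => f (kernelMatrix V X)) (Measure.pi fun _ => μ) :=
  integrable_comp_of_ae_mem_isCompact hf
    (aestronglyMeasurable_kernelMatrix hV (hbound.mono fun _ h => h.1) n)
    (isCompact_setOf_abs_apply_le L) (ae_abs_kernelMatrix_apply_le hbound n)

theorem tendsto_integral_comp_kernelMatrix_finset [Countable ι] (hV : ∀ i, AEMeasurable (V i) μ)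
    (hbound : ∀ᵐ x ∂μ, (Summable fun i => V i x ^ 2) ∧ ∑' i, V i x ^ 2 ≤ L)
    {f : Matrix (Fin n) (Fin n) ℝ → ℝ} (hf : Continuous f) :
    Tendsto (fun s : Finset ι =>
        ∫ X : Fin n → Ω, f (kernelMatrix (fun i : s => V i) X) ∂Measure.pi (fun _ => μ)) atTop
      (nhds (∫ X : Fin n → Ω, f (kernelMatrix V X) ∂Measure.pi (fun _ => μ))) := by
  have hboundfin : ∀ s : Finset ι, ∀ᵐ x ∂μ,
      (Summable fun i : s => V i x ^ 2) ∧ ∑' i : s, V i x ^ 2 ≤ L := fun s =>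
    hbound.mono fun x hx => ⟨.of_finite, (hx.1.tsum_subtype_le _ _ fun i => sq_nonneg _).trans hx.2⟩
  obtain ⟨C, hC⟩ :=
    (isCompact_setOf_abs_apply_le (n := n) L).exists_bound_of_continuousOn hf.continuousOn
  refine tendsto_integral_filter_of_dominated_convergence (fun _ => C)
    (Eventually.of_forall fun s => ?_) (Eventually.of_forall fun s => ?_) (integrable_const C) ?_
  · exact hf.comp_aestronglyMeasurable
      (aestronglyMeasurable_kernelMatrix_of_finite (fun i : s => hV i) n)
  · exact (ae_abs_kernelMatrix_apply_le (hboundfin s) n).mono fun X hX => hC _ hX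
  · exact (ae_pi_forall_of_ae hbound).mono fun X hX =>
      (hf.tendsto _).comp (tendsto_kernelMatrix_finset fun j => (hX j).1)

end FiniteMeasure

variable [IsProbabilityMeasure μ] [DecidableEq ι] {l : ι → ℝ} {b : ℝ}

theorem integral_traceExpSubOne_kernelMatrix_le_of_fintype [Fintype ι]
    (hV : ∀ i, AEMeasurable (V i) μ) (hL : 0 < L) (hbound : ∀ᵐ x ∂μ, ∑ i, V i x ^ 2 ≤ L)
    (hcov : ∀ i j, ∫ x, V i x * V j x ∂μ = diagonal l i j) (hb : 0 ≤ b)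
    (hl : ∀ i, l i ≤ b) (n : ℕ) :
    b * ∫ X : Fin n → Ω, traceExpSubOne (kernelMatrix V X) ∂Measure.pi (fun _ => μ) ≤
      (∑ i, l i) * ((1 + b * ((Real.exp L - 1) / L)) ^ n - 1) := by
  have hmeas : AEMeasurable (fun x i => V i x) μ := aemeasurable_pi_lambda _ hV
  set ν := μ.map fun x i => V i x
  have : IsProbabilityMeasure ν := Measure.isProbabilityMeasure_map hmeas
  have hboundν : ∀ᵐ v ∂ν, v ⬝ᵥ v ≤ L := by
    refine (ae_map_iff hmeas (isCompact_setOf_dotProduct_self_le L).measurableSet).2 ?_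
    simpa only [dotProduct, ← sq] using hbound
  have hcovν : ∀ i j, ∫ v, v i * v j ∂ν = diagonal l i j := fun i j => by
    rw [integral_map hmeas (by fun_prop), hcov]
  have hpi : Measure.pi (fun _ : Fin n => ν) =
      (Measure.pi fun _ => μ).map fun X j i => V i (X j) :=
    (Measure.pi_map_pi fun _ => hmeas).symm
  have hgram := integral_traceExpSubOne_gram_le hL hboundν hcovν hb hl n
  have hint := (integrable_traceExpSubOne_gram hboundν n).1
  rw [hpi] at hgram hint
  rw [integral_map (aemeasurable_sample_features hV n) hint] at hgram
  simp only [kernelMatrix_eq_mul_transpose]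
  simpa only [traceExpSubOne_mul_comm (of _)ᵀ] using hgram

theorem integral_traceExpSubOne_kernelMatrix_le [Countable ι]
    (hV : ∀ i, AEMeasurable (V i) μ) (hL : 0 < L)
    (hbound : ∀ᵐ x ∂μ, (Summable fun i => V i x ^ 2) ∧ ∑' i, V i x ^ 2 ≤ L)
    (hcov : ∀ i j, ∫ x, V i x * V j x ∂μ = diagonal l i j) (hb : 0 ≤ b)
    (hl : ∀ i, l i ≤ b) (hlsum : Summable l) (n : ℕ) :
    b * ∫ X : Fin n → Ω, traceExpSubOne (kernelMatrix V X) ∂Measure.pi (fun _ => μ) ≤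
      (∑' i, l i) * ((1 + b * ((Real.exp L - 1) / L)) ^ n - 1) := by
  have hfin : ∀ s : Finset ι,
      b * ∫ X : Fin n → Ω, traceExpSubOne (kernelMatrix (fun i : s => V i) X)
          ∂Measure.pi (fun _ => μ) ≤
        (∑ i ∈ s, l i) * ((1 + b * ((Real.exp L - 1) / L)) ^ n - 1) := by
    intro s
    have hcovfin : ∀ i j : s, ∫ x, V i x * V j x ∂μ = diagonal (fun i : s => l i) i j :=
      fun i j => by rw [hcov, diagonal_apply, diagonal_apply]; simp only [Subtype.ext_iff]
    rw [← Finset.sum_coe_sort]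
    refine integral_traceExpSubOne_kernelMatrix_le_of_fintype (fun i : s => hV i) hL
      (hbound.mono fun x hx => ?_) hcovfin hb (fun i => hl i) n
    exact (Finset.sum_coe_sort s fun i => V i x ^ 2).trans_le
      ((hx.1.sum_le_tsum s fun i _ => sq_nonneg _).trans hx.2)
  exact le_of_tendsto_of_tendsto' ((tendsto_integral_comp_kernelMatrix_finset hV hbound
    continuous_traceExpSubOne).const_mul b) (hlsum.hasSum.mul_const _) hfin

theorem measureReal_lt_eigval_kernelMatrix_le [Countable ι]
    (hV : ∀ i, AEMeasurable (V i) μ) (hL : 0 < L)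
    (hbound : ∀ᵐ x ∂μ, (Summable fun i => V i x ^ 2) ∧ ∑' i, V i x ^ 2 ≤ L)
    (hcov : ∀ i j, ∫ x, V i x * V j x ∂μ = diagonal l i j) (hb : 0 ≤ b)
    (hl : ∀ i, l i ≤ b) (hlsum : Summable l) {n : ℕ} (hn : 0 < n) {s θ : ℝ} (hs : 0 ≤ s)
    (hθ : 0 < θ) :
    b * ((Real.exp (θ * s) - 1) * (Measure.pi fun _ : Fin n => μ).real
        {X | s < eigval (θ⁻¹ • kernelMatrix V X) 1}) ≤
      (∑' i, l i) * ((1 + b * ((Real.exp L - 1) / L)) ^ n - 1) := by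
  refine le_trans (mul_le_mul_of_nonneg_left ?_ hb)
    (integral_traceExpSubOne_kernelMatrix_le hV hL hbound hcov hb hl hlsum n)
  have hpsd : ∀ᵐ X ∂Measure.pi (fun _ : Fin n => μ), (kernelMatrix V X).PosSemidef :=
    (ae_pi_forall_of_ae hbound).mono fun X hX => posSemidef_kernelMatrix fun j => (hX j).1
  have hexp : ∀ᵐ X ∂Measure.pi (fun _ : Fin n => μ), s < eigval (θ⁻¹ • kernelMatrix V X) 1 →
      Real.exp (θ * s) - 1 ≤ traceExpSubOne (kernelMatrix V X) := by
    filter_upwards [hpsd] with X hX hsX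
    have h := exp_mul_eigval_one_sub_one_le hn (hX.smul (inv_nonneg.2 hθ.le)) hθ.le
    rw [smul_inv_smul₀ hθ.ne'] at h
    have hmono : Real.exp (θ * s) ≤ Real.exp (θ * eigval (θ⁻¹ • kernelMatrix V X) 1) := by gcongr
    linarith
  have hpos : 0 ≤ Real.exp (θ * s) - 1 := sub_nonneg.2 (Real.one_le_exp (by positivity))
  calc _ ≤ (Real.exp (θ * s) - 1) * (Measure.pi fun _ : Fin n => μ).real
        {X | Real.exp (θ * s) - 1 ≤ traceExpSubOne (kernelMatrix V X)} :=
        mul_le_mul_of_nonneg_left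
          (ENNReal.toReal_mono (measure_ne_top _ _) (measure_mono_ae hexp)) hpos
    _ ≤ _ := mul_meas_ge_le_integral_of_nonneg (hpsd.mono fun X hX => traceExpSubOne_nonneg hX)
        (integrable_comp_kernelMatrix hV hbound continuous_traceExpSubOne) _

-- Rescaling the features by `L⁻¹ᐟ²` makes the bound on their norm equal to `1`.
theorem measureReal_lt_eigval_inv_smul_kernelMatrix_le [Countable ι]
    (hV : ∀ i, AEMeasurable (V i) μ) (hL : 0 < L)
    (hbound : ∀ᵐ x ∂μ, (Summable fun i => V i x ^ 2) ∧ ∑' i, V i x ^ 2 ≤ L)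
    (hcov : ∀ i j, ∫ x, V i x * V j x ∂μ = diagonal l i j) (hb : 0 < b)
    (hl : ∀ i, l i ≤ b) (hlsum : Summable l) {n : ℕ} (hn : 0 < n) {s : ℝ} (hs : 0 ≤ s) :
    (Real.exp (n / L * s) - 1) * (Measure.pi fun _ : Fin n => μ).real
        {X | s < eigval ((n : ℝ)⁻¹ • kernelMatrix V X) 1} ≤
      (∑' i, l i) / b * Real.exp (n / L * b * (Real.exp 1 - 1)) := by
  have hsq : (√L)⁻¹ ^ 2 = L⁻¹ := by rw [inv_pow, Real.sq_sqrt hL.le]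
  have hker : ∀ X : Fin n → Ω, (n / L)⁻¹ • kernelMatrix (fun i x => (√L)⁻¹ * V i x) X =
      (n : ℝ)⁻¹ • kernelMatrix V X := fun X => by
    rw [kernelMatrix_const_mul, hsq, smul_smul, inv_div, div_mul_eq_mul_div,
      mul_inv_cancel₀ hL.ne', one_div]
  have hbound' : ∀ᵐ x ∂μ, (Summable fun i => ((√L)⁻¹ * V i x) ^ 2) ∧
      ∑' i, ((√L)⁻¹ * V i x) ^ 2 ≤ 1 := by
    filter_upwards [hbound] with x hx
    simp only [mul_pow, hsq, tsum_mul_left]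
    exact ⟨hx.1.mul_left _, (inv_mul_le_one₀ hL).2 hx.2⟩
  have hcov' : ∀ i j, ∫ x, (√L)⁻¹ * V i x * ((√L)⁻¹ * V j x) ∂μ =
      diagonal (fun i => L⁻¹ * l i) i j := fun i j => by
    simp only [mul_mul_mul_comm _ (V i _), ← sq, hsq, integral_const_mul, hcov, diagonal_apply,
      mul_ite, mul_zero]
  have h := measureReal_lt_eigval_kernelMatrix_le (fun i => (hV i).const_mul _) one_pos hbound'
    hcov' (by positivity) (fun i => mul_le_mul_of_nonneg_left (hl i) (by positivity))
    (hlsum.mul_left _) hn hs (θ := n / L) (by positivity)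
  simp only [hker, tsum_mul_left, mul_assoc L⁻¹, mul_le_mul_iff_right₀ (inv_pos.2 hL)] at h
  rw [div_mul_eq_mul_div (∑' i, l i), le_div_iff₀' hb]
  have hl0 : ∀ i, 0 ≤ l i := fun i => by
    rw [← diagonal_apply_eq l i, ← hcov]
    exact integral_nonneg fun x => mul_self_nonneg _
  refine h.trans (mul_le_mul_of_nonneg_left ?_ (tsum_nonneg hl0))
  calc _ ≤ (1 + L⁻¹ * b * (Real.exp 1 - 1)) ^ n := by rw [div_one, mul_assoc]; linarith
    _ ≤ Real.exp (L⁻¹ * b * (Real.exp 1 - 1)) ^ n := by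
        have hexp : 0 ≤ Real.exp 1 - 1 := by linarith [Real.add_one_le_exp 1]
        rw [add_comm]
        gcongr
        exact Real.add_one_le_exp _
    _ = _ := by rw [← Real.exp_nat_mul]; ring_nf

end KernelMatrix

section TailKernel

variable {lam : ℕ → ℝ} {ψ : ℕ → 𝒳 → ℝ} {k n : ℕ}

theorem summable_tail (hlams : Summable lam) (k : ℕ) : Summable fun i => lam (k + i) :=
  hlams.comp_injective (add_right_injective k)

theorem le_opTail (hlams : Summable lam) (i : ℕ) : lam (k + i) ≤ opTail lam k :=
  le_ciSup (f := fun i => lam (k + i)) (summable_tail hlams k).tendsto_atTop_zero.bddAbove_range i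

theorem opTail_nonneg (hlam : ∀ i, 0 ≤ lam i) (k : ℕ) : 0 ≤ opTail lam k :=
  Real.iSup_nonneg fun _ => hlam _

theorem opTail_le_trTail (hlam : ∀ i, 0 ≤ lam i) (hlams : Summable lam) :
    opTail lam k ≤ trTail lam k :=
  ciSup_le fun i => (summable_tail hlams k).le_tsum i fun _ _ => hlam _

theorem tail_eq_zero_of_opTail_eq_zero (hlam : ∀ i, 0 ≤ lam i) (hlams : Summable lam)
    (hop : opTail lam k = 0) (i : ℕ) : lam (k + i) = 0 :=
  le_antisymm ((le_opTail hlams i).trans_eq hop) (hlam _)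

theorem opTail_eq_of_antitone (hmono : Antitone lam) (k : ℕ) : opTail lam k = lam k :=
  le_antisymm (ciSup_le fun i => hmono (k.le_add_right i))
    (le_ciSup (f := fun i => lam (k + i))
      ⟨lam k, Set.forall_mem_range.2 fun i => hmono (k.le_add_right i)⟩ 0)

/-- The features `√λ_i ψ_i` with `i > k`, which have `K_{>k}` as their kernel matrix. -/
def tailFeature (lam : ℕ → ℝ) (ψ : ℕ → 𝒳 → ℝ) (k i : ℕ) (x : 𝒳) : ℝ :=
  √(lam (k + i)) * ψ (k + i) x

theorem tailFeature_sq (hlam : ∀ i, 0 ≤ lam i) (i : ℕ) (x : 𝒳) :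
    tailFeature lam ψ k i x ^ 2 = lam (k + i) * ψ (k + i) x ^ 2 := by
  rw [tailFeature, mul_pow, Real.sq_sqrt (hlam _)]

theorem kerMatGT_eq_kernelMatrix (hlam : ∀ i, 0 ≤ lam i) (X : Fin n → 𝒳) :
    kerMatGT lam ψ k X = kernelMatrix (tailFeature lam ψ k) X := by
  ext j m
  refine tsum_congr fun i => ?_
  rw [tailFeature, tailFeature, mul_mul_mul_comm, Real.mul_self_sqrt (hlam _), mul_assoc]

theorem eigval_smul_kerMatGT_le_zero_of_opTail_eq_zero (hlam : ∀ i, 0 ≤ lam i)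
    (hlams : Summable lam) (hop : opTail lam k = 0) (hn : 0 < n) (c : ℝ) (X : Fin n → 𝒳) :
    eigval (c • kerMatGT lam ψ k X) 1 ≤ 0 := by
  have hker : c • kerMatGT lam ψ k X = 0 := by
    ext j m
    simp [kerMatGT, tail_eq_zero_of_opTail_eq_zero hlam hlams hop]
  have h := exp_mul_eigval_one_sub_one_le hn PosSemidef.zero zero_le_one
  rw [smul_zero, traceExpSubOne_zero, one_mul, sub_nonpos, Real.exp_le_one_iff] at h
  rwa [hker]

variable [MeasurableSpace 𝒳] {μ : Measure 𝒳}

theorem aemeasurable_tailFeature (hψ : OrthonormalFamily μ ψ) (i : ℕ) :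
    AEMeasurable (tailFeature lam ψ k i) μ :=
  (hψ.1 (k + i)).aestronglyMeasurable.aemeasurable.const_mul _

theorem integral_tailFeature_mul (hlam : ∀ i, 0 ≤ lam i) (hψ : OrthonormalFamily μ ψ) (i j : ℕ) :
    ∫ x, tailFeature lam ψ k i x * tailFeature lam ψ k j x ∂μ =
      diagonal (fun i => lam (k + i)) i j := by
  simp only [tailFeature, mul_mul_mul_comm _ (ψ (k + i) _), integral_const_mul, hψ.2,
    diagonal_apply, add_right_inj]
  split_ifs with hij
  · rw [hij, Real.mul_self_sqrt (hlam _), mul_one]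
  · rw [mul_zero]

theorem integrable_tailFeature_sq (hψ : OrthonormalFamily μ ψ) (i : ℕ) :
    Integrable (fun x => tailFeature lam ψ k i x ^ 2) μ :=
  ((hψ.1 (k + i)).const_mul _).integrable_sq

theorem integral_tailFeature_sq (hlam : ∀ i, 0 ≤ lam i) (hψ : OrthonormalFamily μ ψ) (i : ℕ) :
    ∫ x, tailFeature lam ψ k i x ^ 2 ∂μ = lam (k + i) := by
  simp only [sq, integral_tailFeature_mul hlam hψ, diagonal_apply_eq]

theorem ae_summable_tailFeature_sq (hlam : ∀ i, 0 ≤ lam i) (hlams : Summable lam)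
    (hψ : OrthonormalFamily μ ψ) :
    ∀ᵐ x ∂μ, Summable fun i => tailFeature lam ψ k i x ^ 2 := by
  have hnorm : ∀ i, eLpNorm (fun x => tailFeature lam ψ k i x ^ 2) 1 μ =
      ENNReal.ofReal (lam (k + i)) := fun i => by
    rw [eLpNorm_one_eq_lintegral_enorm, ← integral_tailFeature_sq hlam hψ,
      ofReal_integral_eq_lintegral_ofReal (integrable_tailFeature_sq hψ i)
        (ae_of_all _ fun x => sq_nonneg _)]
    exact lintegral_congr fun x => Real.enorm_of_nonneg (sq_nonneg _)
  have hsum := summable_norm_of_tsum_eLpNorm_ne_top le_rfl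
    (fun i => (integrable_tailFeature_sq (lam := lam) (k := k) hψ i).1)
    (by simpa only [hnorm] using (summable_tail hlams k).tsum_ofReal_ne_top)
  exact hsum.mono fun x hx => hx.of_norm

theorem ae_tsum_tailFeature_sq_le (hlam : ∀ i, 0 ≤ lam i) (hβ : BetaFinite μ lam ψ k)
    (ht : 0 < trTail lam k) :
    ∀ᵐ x ∂μ, ∑' i, tailFeature lam ψ k i x ^ 2 ≤ betaQ μ lam ψ k * trTail lam k := by
  filter_upwards [ae_le_essSup hβ] with x hx
  simp only [tailFeature_sq hlam]
  exact (div_le_iff₀ ht).1 (((le_max_right _ _).trans (le_max_left _ _)).trans hx)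

theorem integral_tsum_tailFeature_sq (hlam : ∀ i, 0 ≤ lam i) (hlams : Summable lam)
    (hψ : OrthonormalFamily μ ψ) :
    ∫ x, ∑' i, tailFeature lam ψ k i x ^ 2 ∂μ = trTail lam k := by
  rw [← integral_tsum_of_summable_integral_norm (integrable_tailFeature_sq hψ)
    (by simpa only [norm_pow, Real.norm_eq_abs, sq_abs, integral_tailFeature_sq hlam hψ] using
      summable_tail hlams k)]
  simp only [integral_tailFeature_sq hlam hψ, trTail]

variable [IsProbabilityMeasure μ]

theorem one_le_betaQ (hlam : ∀ i, 0 ≤ lam i) (hlams : Summable lam) (hψ : OrthonormalFamily μ ψ)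
    (hβ : BetaFinite μ lam ψ k) (ht : 0 < trTail lam k) : 1 ≤ betaQ μ lam ψ k := by
  refine (le_mul_iff_one_le_left ht).1 ?_
  calc trTail lam k = ∫ x, ∑' i, tailFeature lam ψ k i x ^ 2 ∂μ :=
        (integral_tsum_tailFeature_sq hlam hlams hψ).symm
    _ ≤ ∫ _, betaQ μ lam ψ k * trTail lam k ∂μ :=
        integral_mono_of_nonneg (ae_of_all _ fun x => tsum_nonneg fun i => sq_nonneg _)
          (integrable_const _) (ae_tsum_tailFeature_sq_le hlam hβ ht)
    _ = betaQ μ lam ψ k * trTail lam k := by rw [integral_const, probReal_univ, one_smul]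

theorem le_div_pow_four_mul_exp_of_exp_mul_le {u P r : ℝ} (hk : 1 ≤ k) (hu : 0 ≤ u) (hP : 0 ≤ P)
    (hr : 0 ≤ r)
    (h : (Real.exp (4 * (u + Real.log (k + 1))) - 1) * P ≤ r * Real.exp (u * (Real.exp 1 - 1))) :
    P ≤ r / (k : ℝ) ^ 4 * Real.exp (-(2 * u)) := by
  have hexp : Real.exp (4 * (u + Real.log (k + 1))) = Real.exp (4 * u) * ((k : ℝ) + 1) ^ 4 := by
    rw [mul_add, Real.exp_add, ← Real.exp_log (show (0 : ℝ) < k + 1 by positivity),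
      ← Real.exp_nat_mul, Real.log_exp, Nat.cast_ofNat]
  have hlower : Real.exp (4 * u) * (k : ℝ) ^ 4 ≤ Real.exp (4 * (u + Real.log (k + 1))) - 1 := by
    have hpow : (k : ℝ) ^ 4 + 1 ≤ ((k : ℝ) + 1) ^ 4 := by
      have : 0 ≤ (k : ℝ) ^ 3 + k ^ 2 + k := by positivity
      nlinarith
    have := mul_le_mul_of_nonneg_left hpow (Real.exp_pos (4 * u)).le
    linarith [Real.one_le_exp (show 0 ≤ 4 * u by positivity)]
  have hupper : Real.exp (u * (Real.exp 1 - 1)) ≤ Real.exp (2 * u) := by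
    rw [mul_comm 2 u]
    gcongr
    linarith [Real.exp_one_lt_d9]
  have hmain : Real.exp (4 * u) * (k : ℝ) ^ 4 * P ≤ r * Real.exp (2 * u) :=
    (mul_le_mul_of_nonneg_right hlower hP).trans
      (h.trans (mul_le_mul_of_nonneg_left hupper hr))
  calc P ≤ r * Real.exp (2 * u) / (Real.exp (4 * u) * (k : ℝ) ^ 4) :=
        (le_div_iff₀' (by positivity)).2 hmain
    _ = r / (k : ℝ) ^ 4 * Real.exp (2 * u - 4 * u) := by rw [Real.exp_sub]; field_simp
    _ = r / (k : ℝ) ^ 4 * Real.exp (-(2 * u)) := by ring_nf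

theorem measureReal_lt_eigval_kerMatGT_le (hlam : ∀ i, 0 ≤ lam i) (hlams : Summable lam)
    (hψ : OrthonormalFamily μ ψ) (hβ : BetaFinite μ lam ψ k) (hop : 0 < opTail lam k)
    (hn : 1 ≤ n) (hk : 1 ≤ k) :
    (iid μ n).real {X | 4 * (opTail lam k +
        betaQ μ lam ψ k * Real.log ((k : ℝ) + 1) * trTail lam k / n) <
          eigval ((n : ℝ)⁻¹ • kerMatGT lam ψ k X) 1} ≤
      rEff lam k / (k : ℝ) ^ 4 *
        Real.exp (-(2 * (1 / betaQ μ lam ψ k * (n / rEff lam k)))) := by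
  have ht : 0 < trTail lam k := hop.trans_le (opTail_le_trTail hlam hlams)
  have hβ1 : 0 < betaQ μ lam ψ k := one_pos.trans_le (one_le_betaQ hlam hlams hψ hβ ht)
  have hlog : 0 ≤ Real.log ((k : ℝ) + 1) := Real.log_nonneg (by simp)
  have htail := measureReal_lt_eigval_inv_smul_kernelMatrix_le (aemeasurable_tailFeature hψ)
    (mul_pos hβ1 ht) ((ae_summable_tailFeature_sq hlam hlams hψ).and
      (ae_tsum_tailFeature_sq_le hlam hβ ht))
    (integral_tailFeature_mul hlam hψ) hop (le_opTail hlams) (summable_tail hlams k) hn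
    (s := 4 * (opTail lam k + betaQ μ lam ψ k * Real.log ((k : ℝ) + 1) * trTail lam k / n))
    (by positivity)
  simp only [← kerMatGT_eq_kernelMatrix hlam] at htail
  have hu : (n : ℝ) / (betaQ μ lam ψ k * trTail lam k) * opTail lam k =
      1 / betaQ μ lam ψ k * (n / rEff lam k) := by
    rw [rEff]
    field_simp
  have hr : 0 < rEff lam k := div_pos ht hop
  refine le_div_pow_four_mul_exp_of_exp_mul_le hk (by positivity) measureReal_nonneg hr.le ?_
  have hexponent : (n : ℝ) / (betaQ μ lam ψ k * trTail lam k) * (4 * (opTail lam k +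
      betaQ μ lam ψ k * Real.log ((k : ℝ) + 1) * trTail lam k / n)) =
        4 * (1 / betaQ μ lam ψ k * (n / rEff lam k) + Real.log ((k : ℝ) + 1)) := by
    rw [← hu]
    field_simp
  rwa [hexponent, hu] at htail

theorem ofReal_one_sub_le_measure_of_measureReal_compl_le {Ω : Type*} [MeasurableSpace Ω]
    {ν : Measure Ω} [IsProbabilityMeasure ν] {s : Set Ω} {p : ℝ} (h : ν.real sᶜ ≤ p) :
    ENNReal.ofReal (1 - p) ≤ ν s := by
  rw [ENNReal.ofReal_le_iff_le_toReal (measure_ne_top _ _), sub_le_iff_le_add]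
  calc 1 = ν.real Set.univ := probReal_univ.symm
    _ ≤ ν.real s + ν.real sᶜ := by rw [← Set.union_compl_self s]; exact measureReal_union_le _ _
    _ ≤ ν.real s + p := by gcongr

theorem tail_kernel_matrix_top_eigenvalue_general (hlam : ∀ i, 0 ≤ lam i) (hlams : Summable lam)
    (hψ : OrthonormalFamily μ ψ) (hβ : BetaFinite μ lam ψ k) (hn : 1 ≤ n) (hk : 1 ≤ k) :
    ENNReal.ofReal
        (1 - 4 * (rEff lam k / (k : ℝ) ^ 4) *
          Real.exp (-(1 / betaQ μ lam ψ k) * ((n : ℝ) / rEff lam k))) ≤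
      iid μ n {X : Fin n → 𝒳 |
        eigval ((n : ℝ)⁻¹ • kerMatGT lam ψ k X) 1 ≤
          4 * (opTail lam k +
            betaQ μ lam ψ k * Real.log ((k : ℝ) + 1) * trTail lam k / (n : ℝ))} := by
  have : IsProbabilityMeasure (iid μ n) := by unfold iid; infer_instance
  refine ofReal_one_sub_le_measure_of_measureReal_compl_le ?_
  rw [Set.compl_ofPred]
  simp only [not_le]
  rcases (opTail_nonneg hlam k).eq_or_lt with hop | hop
  · have ht : trTail lam k = 0 := by
      simp only [trTail, tail_eq_zero_of_opTail_eq_zero hlam hlams hop.symm, tsum_zero]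
    have hle := fun X : Fin n → 𝒳 =>
      eigval_smul_kerMatGT_le_zero_of_opTail_eq_zero (ψ := ψ) hlam hlams hop.symm hn (n : ℝ)⁻¹ X
    simp only [ht, ← hop, mul_zero, zero_div, add_zero, (hle _).not_gt, Set.ofPred_false,
      measureReal_empty]
    have hr : 0 ≤ rEff lam k := div_nonneg ht.ge (opTail_nonneg hlam k)
    positivity
  · have ht : 0 < trTail lam k := hop.trans_le (opTail_le_trTail hlam hlams)
    have hβ1 : 0 < betaQ μ lam ψ k := one_pos.trans_le (one_le_betaQ hlam hlams hψ hβ ht)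
    have hr : 0 < rEff lam k := div_pos ht hop
    refine (measureReal_lt_eigval_kerMatGT_le hlam hlams hψ hβ hop hn hk).trans ?_
    have : 0 < 1 / betaQ μ lam ψ k * (n / rEff lam k) := by positivity
    gcongr ?_ * Real.exp ?_
    · linarith [show 0 < rEff lam k / (k : ℝ) ^ 4 by positivity]
    · linarith

end TailKernel

theorem tail_kernel_matrix_top_eigenvalue :
    ∃ c : ℝ, 0 < c ∧ ∃ c' : ℝ, 0 < c' ∧
      ∀ (𝒳 : Type u) [MeasurableSpace 𝒳] (μ : Measure 𝒳) [IsProbabilityMeasure μ]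
        (lam : ℕ → ℝ) (ψ : ℕ → 𝒳 → ℝ),
        (∀ i, 0 ≤ lam i) → Summable lam →
        OrthonormalFamily μ ψ →
        (∀ i j : ℕ, i ≤ j → lam j ≤ lam i) →
        (∀ k, BetaFinite μ lam ψ k) →
        RegularityAssumption μ lam ψ →
        ∀ n k : ℕ, 1 ≤ n → 1 ≤ k →
          ENNReal.ofReal
              (1 - 4 * (rEff lam k / (k : ℝ) ^ 4) *
                Real.exp (-(c' / betaQ μ lam ψ k) * ((n : ℝ) / rEff lam k))) ≤
            iid μ n {X : Fin n → 𝒳 |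
              eigval ((n : ℝ)⁻¹ • kerMatGT lam ψ k X) 1 ≤
                c * (lam k +
                  betaQ μ lam ψ k * Real.log ((k : ℝ) + 1) * trTail lam k / (n : ℝ))} := by
  refine ⟨4, by norm_num, 1, one_pos, fun 𝒳 _ μ _ lam ψ hlam hlams hψ hmono hβ _ n k hn hk => ?_⟩
  rw [← opTail_eq_of_antitone (fun i j => hmono i j) k]
  exact tail_kernel_matrix_top_eigenvalue_general hlam hlams hψ (hβ k) hn hk

end KRRPaper

end
end

section
/- Deterministic variance bound. Fix points x_1,…,x_n ∈ 𝒳 (all series below assumed to converge), k ≥ 1, γ_n ≥ 0, and suppose the matrix A_k := K_{>k} + nγ_n·I is positive definite and μ_k(ψ_{≤k}(X)^⊤ψ_{≤k}(X)) > 0. Let A := K + nγ_n·I and let M ∈ ℝ^{n×n} have entries M_{jl} := ∑_i λ_i²·ψ_i(x_j)ψ_i(x_l). Then σ_ε²·tr(A^{-1}·M·A^{-1}) ≤ σ_ε²·( μ₁(A_k^{-1})²·tr(ψ_{≤k}(X)·ψ_{≤k}(X)^⊤) / ( μ_n(A_k^{-1})²·μ_k(ψ_{≤k}(X)^⊤ψ_{≤k}(X))²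 ) + μ₁(A_k^{-1})²·∑_{j=1}^n ∑_{i>k} λ_i²·ψ_i(x_j)² ) for every σ_ε ≥ 0. -/
open MeasureTheory Matrix Filter

noncomputable section

namespace KRRPaper

universe u

variable {𝒳 : Type u}

/-!
Split the kernel at level `k`: with `Ψ = ψ_{≤k}(X)` and `Λ = diag(λ₁, …, λ_k)` we have
`A = A_k + ΨΛΨᵀ`, and `M` is `ΨΛ²Ψᵀ` plus a positive semidefinite tail. Put `Q = A⁻¹` and
`P = A_k⁻¹`.

For the tail, antitonicity of inversion in the Löwner order gives `Q ≤ P ≤ μ₁(P)`, so conjugation by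
`Q` multiplies the trace by at most `μ₁(P)²`.

For the head, put `U = ΛΨᵀQ` and `W = ΨᵀP`. The resolvent identity `P = Q + P(ΨΛΨᵀ)Q` reads
`W = ΨᵀQ + (ΨᵀPΨ)U`. As `UᵀΨᵀQ = (QΨ)Λ(QΨ)ᵀ ≥ 0` and `ΨᵀPΨ ≥ c` with `c = μ_n(P) μ_k(ΨᵀΨ)`, this
yields `UᵀW ≥ c UᵀU`. Expanding `(W - cU)ᵀ(W - cU) ≥ 0` then gives `c² UᵀU ≤ WᵀW`, where
`UᵀU = QΨΛ²ΨᵀQ` is the head of the variance and `tr(WᵀW) ≤ μ₁(P)² tr(ΨΨᵀ)`.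
-/

section LoewnerOrder

open scoped ComplexOrder MatrixOrder

variable {𝕜 m n k ι : Type*} [RCLike 𝕜]

theorem posSemidef_of_hasSum {f : ι → Matrix n n 𝕜} {M : Matrix n n 𝕜}
    (hf : ∀ i, (f i).PosSemidef) (hM : HasSum f M) : M.PosSemidef := by
  have hherm : M.IsHermitian :=
    hM.matrix_conjTranspose.unique (by simpa only [(hf _).isHermitian.eq] using hM)
  have hentry (p q : n) : HasSum (fun i ↦ f i p q) (M p q) :=
    Pi.hasSum.mp (Pi.hasSum.mp hM p) q
  refine ⟨hherm, fun x ↦ HasSum.nonneg (L := .unconditional ι) (fun i ↦ (hf i).2 x) ?_⟩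
  exact hasSum_sum fun p _ ↦ hasSum_sum fun q _ ↦ ((hentry p q).mul_left _).mul_right _

theorem sq_smul_conjTranspose_mul_self_le [Finite n] [Fintype m] {U W : Matrix m n 𝕜} {c : ℝ}
    (hc : 0 ≤ c) (h : c • (Uᴴ * U) ≤ Uᴴ * W) : c ^ 2 • (Uᴴ * U) ≤ Wᴴ * W := by
  have hherm : Wᴴ * U = Uᴴ * W := by
    have hsum := (isHermitian_conjTranspose_mul_self U).smul (IsSelfAdjoint.all c) |>.add
      (le_iff.mp h).isHermitian
    simpa [IsHermitian] using hsum
  have hsquare : Wᴴ * W - c ^ 2 • (Uᴴ * U) =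
      (W - c • U)ᴴ * (W - c • U) + (2 * c) • (Uᴴ * W - c • (Uᴴ * U)) := by
    simp only [conjTranspose_sub, conjTranspose_smul, star_trivial, Matrix.sub_mul, Matrix.mul_sub,
      Matrix.smul_mul, Matrix.mul_smul, hherm]
    module
  rw [le_iff, hsquare]
  exact (posSemidef_conjTranspose_mul_self _).add ((le_iff.mp h).smul (by positivity))

theorem le_add_mul_mul_conjTranspose [Finite n] [Fintype k] {Λ : Matrix k k 𝕜}
    (A : Matrix n n 𝕜) (hΛ : Λ.PosSemidef) (Ψ : Matrix n k 𝕜) : A ≤ A + Ψ * Λ * Ψᴴ := by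
  rw [le_iff, add_sub_cancel_left]
  exact hΛ.mul_mul_conjTranspose_same Ψ

variable [Fintype n]

theorem conjTranspose_mul_mul_mono [Finite m] {A B : Matrix n n 𝕜} (h : A ≤ B) (C : Matrix n m 𝕜) :
    Cᴴ * A * C ≤ Cᴴ * B * C := by
  rw [le_iff, ← Matrix.sub_mul, ← Matrix.mul_sub]
  exact (le_iff.mp h).conjTranspose_mul_mul_same C

theorem trace_mono {A B : Matrix n n 𝕜} (h : A ≤ B) : A.trace ≤ B.trace := by
  rw [← sub_nonneg, ← trace_sub]
  exact (le_iff.mp h).trace_nonneg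

theorem trace_mul_le_trace_mul {A B M : Matrix n n 𝕜} (hAB : A ≤ B) (hM : M.PosSemidef) :
    (A * M).trace ≤ (B * M).trace := by
  classical
  obtain ⟨N, rfl⟩ := CStarAlgebra.nonneg_iff_eq_star_mul_self.mp hM.nonneg
  have hcycle (C : Matrix n n 𝕜) : (C * (star N * N)).trace = (Nᴴᴴ * C * Nᴴ).trace := by
    rw [conjTranspose_conjTranspose, trace_mul_cycle', star_eq_conjTranspose, ← Matrix.mul_assoc]
  rw [hcycle, hcycle]
  exact trace_mono (conjTranspose_mul_mul_mono hAB Nᴴ)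

theorem smul_conjTranspose_mul_self_le_of_resolvent [Fintype k] [DecidableEq k]
    {P Q : Matrix n n 𝕜} {Λ : Matrix k k 𝕜} {Ψ : Matrix n k 𝕜} (hQ : Q.IsHermitian)
    (hΛ : Λ.PosSemidef) (hPQ : P = Q + P * (Ψ * Λ * Ψᴴ) * Q) {c : ℝ} (hcΨ : c • 1 ≤ Ψᴴ * P * Ψ) :
    c • ((Λ * Ψᴴ * Q)ᴴ * (Λ * Ψᴴ * Q)) ≤ (Λ * Ψᴴ * Q)ᴴ * (Ψᴴ * P) := by
  have hadjoint : (Λ * Ψᴴ * Q)ᴴ = Q * Ψ * Λ := by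
    simp only [conjTranspose_mul, hQ.eq, hΛ.isHermitian.eq, conjTranspose_conjTranspose,
      Matrix.mul_assoc]
  have hresolvent : Ψᴴ * P = Ψᴴ * Q + Ψᴴ * P * Ψ * (Λ * Ψᴴ * Q) := by
    conv_lhs => rw [hPQ]
    simp only [Matrix.mul_add, Matrix.mul_assoc]
  calc
    c • ((Λ * Ψᴴ * Q)ᴴ * (Λ * Ψᴴ * Q)) = (Λ * Ψᴴ * Q)ᴴ * (c • 1) * (Λ * Ψᴴ * Q) := by
      rw [Matrix.mul_smul, Matrix.mul_one, Matrix.smul_mul]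
    _ ≤ (Λ * Ψᴴ * Q)ᴴ * (Ψᴴ * P * Ψ) * (Λ * Ψᴴ * Q) := conjTranspose_mul_mul_mono hcΨ _
    _ ≤ (Λ * Ψᴴ * Q)ᴴ * (Ψᴴ * P * Ψ) * (Λ * Ψᴴ * Q) + (Q * Ψ) * Λ * (Q * Ψ)ᴴ :=
      le_add_mul_mul_conjTranspose _ hΛ _
    _ = (Λ * Ψᴴ * Q)ᴴ * (Ψᴴ * P * Ψ * (Λ * Ψᴴ * Q)) + (Λ * Ψᴴ * Q)ᴴ * (Ψᴴ * Q) := by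
      rw [hadjoint, conjTranspose_mul, hQ.eq, Matrix.mul_assoc _ (Ψᴴ * P * Ψ)]
    _ = (Λ * Ψᴴ * Q)ᴴ * (Ψᴴ * P) := by
      rw [← Matrix.mul_add, add_comm, ← hresolvent]

variable [DecidableEq n]

theorem le_smul_one_of_eigenvalues_le {A : Matrix n n 𝕜} (hA : A.IsHermitian) {c : ℝ}
    (hc : ∀ i, hA.eigenvalues i ≤ c) : A ≤ c • 1 := by
  rw [← Algebra.algebraMap_eq_smul_one, le_algebraMap_iff_spectrum_le hA.isSelfAdjoint,
    hA.spectrum_real_eq_range_eigenvalues]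
  simpa only [Set.forall_mem_range] using hc

theorem smul_one_le_of_le_eigenvalues {A : Matrix n n 𝕜} (hA : A.IsHermitian) {c : ℝ}
    (hc : ∀ i, c ≤ hA.eigenvalues i) : c • 1 ≤ A := by
  rw [← Algebra.algebraMap_eq_smul_one, algebraMap_le_iff_le_spectrum hA.isSelfAdjoint,
    hA.spectrum_real_eq_range_eigenvalues]
  simpa only [Set.forall_mem_range] using hc

theorem mul_self_le_sq_smul_one {A : Matrix n n 𝕜} (hA : A.PosSemidef) {c : ℝ}
    (hAc : A ≤ c • 1) : A * A ≤ c ^ 2 • 1 := by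
  have hsa : IsSelfAdjoint A := hA.isHermitian.isSelfAdjoint
  rw [← Algebra.algebraMap_eq_smul_one, le_algebraMap_iff_spectrum_le hsa] at hAc
  rw [← Algebra.algebraMap_eq_smul_one, ← pow_two, ← cfc_pow_id (R := ℝ) A 2]
  refine cfc_le_algebraMap _ _ _ fun x hx ↦ ?_
  exact pow_le_pow_left₀ (spectrum_nonneg_of_nonneg hA.nonneg hx) (hAc x hx) 2

theorem trace_mul_mul_self_le {A M : Matrix n n 𝕜} (hA : A.PosSemidef) {c : ℝ}
    (hAc : A ≤ c • 1) (hM : M.PosSemidef) : (A * M * A).trace ≤ c ^ 2 • M.trace := by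
  calc (A * M * A).trace = (A * A * M).trace := trace_mul_cycle ..
    _ ≤ (c ^ 2 • (1 : Matrix n n 𝕜) * M).trace :=
      trace_mul_le_trace_mul (mul_self_le_sq_smul_one hA hAc) hM
    _ = c ^ 2 • M.trace := by rw [Matrix.smul_mul, Matrix.one_mul, trace_smul]

theorem inv_le_inv_of_le {A B : Matrix n n 𝕜} (hA : A.PosDef) (hAB : A ≤ B) : B⁻¹ ≤ A⁻¹ := by
  have hB : B.PosDef := by simpa using hA.add_posSemidef (le_iff.mp hAB)
  have hA_inv_mul := nonsing_inv_mul A (A.isUnit_iff_isUnit_det.mp hA.isUnit)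
  have hA_mul_inv := mul_nonsing_inv A (A.isUnit_iff_isUnit_det.mp hA.isUnit)
  have hB_inv_mul := nonsing_inv_mul B (B.isUnit_iff_isUnit_det.mp hB.isUnit)
  have hdiff : A⁻¹ - B⁻¹ = B⁻¹ * (B - A) * (B⁻¹)ᴴ + (A⁻¹ - B⁻¹) * A * (A⁻¹ - B⁻¹)ᴴ := by
    rw [conjTranspose_sub, hA.inv.isHermitian.eq, hB.inv.isHermitian.eq]
    simp only [Matrix.mul_sub, Matrix.sub_mul, hA_inv_mul, hB_inv_mul, Matrix.one_mul,
      Matrix.mul_assoc, hA_mul_inv, Matrix.mul_one]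
    abel
  rw [le_iff, hdiff]
  exact ((le_iff.mp hAB).mul_mul_conjTranspose_same _).add
    (hA.posSemidef.mul_mul_conjTranspose_same _)

theorem smul_one_le_conjTranspose_mul_mul [Finite k] [DecidableEq k] {b g : ℝ} {P : Matrix n n 𝕜}
    {Ψ : Matrix n k 𝕜} (hb : 0 ≤ b) (hP : b • 1 ≤ P) (hΨ : g • 1 ≤ Ψᴴ * Ψ) :
    (b * g) • 1 ≤ Ψᴴ * P * Ψ := by
  calc (b * g) • (1 : Matrix k k 𝕜) = b • (g • 1) := mul_smul b g 1
    _ ≤ b • (Ψᴴ * Ψ) := by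
      rw [le_iff, ← smul_sub]
      exact (le_iff.mp hΨ).smul hb
    _ = Ψᴴ * (b • (1 : Matrix n n 𝕜)) * Ψ := by simp
    _ ≤ Ψᴴ * P * Ψ := conjTranspose_mul_mul_mono hP Ψ

section LowRankUpdate

variable [Fintype k] {A : Matrix n n 𝕜} {Λ : Matrix k k 𝕜}

theorem trace_inv_add_mul_mul_inv_add_le (hA : A.PosDef) (hΛ : Λ.PosSemidef) (Ψ : Matrix n k 𝕜)
    {M : Matrix n n 𝕜} (hM : M.PosSemidef) {a : ℝ} (hAa : A⁻¹ ≤ a • 1) :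
    ((A + Ψ * Λ * Ψᴴ)⁻¹ * M * (A + Ψ * Λ * Ψᴴ)⁻¹).trace ≤ a ^ 2 • M.trace := by
  have hB : (A + Ψ * Λ * Ψᴴ).PosDef := hA.add_posSemidef (hΛ.mul_mul_conjTranspose_same Ψ)
  exact trace_mul_mul_self_le hB.inv.posSemidef
    ((inv_le_inv_of_le hA (le_add_mul_mul_conjTranspose A hΛ Ψ)).trans hAa) hM

variable [DecidableEq k]

theorem sq_smul_inv_mul_sq_mul_inv_le (hA : A.PosDef) (hΛ : Λ.PosSemidef) (Ψ : Matrix n k 𝕜)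
    {c : ℝ} (hc : 0 ≤ c) (hcΨ : c • 1 ≤ Ψᴴ * A⁻¹ * Ψ) :
    c ^ 2 • ((A + Ψ * Λ * Ψᴴ)⁻¹ * (Ψ * (Λ * Λ) * Ψᴴ) * (A + Ψ * Λ * Ψᴴ)⁻¹) ≤
      A⁻¹ * (Ψ * Ψᴴ) * A⁻¹ := by
  have hB : (A + Ψ * Λ * Ψᴴ).PosDef := hA.add_posSemidef (hΛ.mul_mul_conjTranspose_same Ψ)
  have hresolvent : A⁻¹ = (A + Ψ * Λ * Ψᴴ)⁻¹ + A⁻¹ * (Ψ * Λ * Ψᴴ) * (A + Ψ * Λ * Ψᴴ)⁻¹ := by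
    rw [← sub_eq_iff_eq_add', inv_sub_inv (iff_of_true hA.isUnit hB.isUnit), add_sub_cancel_left]
  have hsq := sq_smul_conjTranspose_mul_self_le hc
    (smul_conjTranspose_mul_self_le_of_resolvent hB.inv.isHermitian hΛ hresolvent hcΨ)
  simp only [conjTranspose_mul, conjTranspose_conjTranspose, hB.inv.isHermitian.eq,
    hA.inv.isHermitian.eq, hΛ.isHermitian.eq] at hsq
  simpa only [Matrix.mul_assoc] using hsq

theorem sq_smul_trace_inv_mul_sq_mul_inv_le (hA : A.PosDef) (hΛ : Λ.PosSemidef) (Ψ : Matrix n k 𝕜)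
    {a c : ℝ} (hAa : A⁻¹ ≤ a • 1) (hc : 0 ≤ c) (hcΨ : c • 1 ≤ Ψᴴ * A⁻¹ * Ψ) :
    c ^ 2 • ((A + Ψ * Λ * Ψᴴ)⁻¹ * (Ψ * (Λ * Λ) * Ψᴴ) * (A + Ψ * Λ * Ψᴴ)⁻¹).trace ≤
      a ^ 2 • (Ψ * Ψᴴ).trace := by
  rw [← trace_smul]
  exact (trace_mono (sq_smul_inv_mul_sq_mul_inv_le hA hΛ Ψ hc hcΨ)).trans
    (trace_mul_mul_self_le hA.inv.posSemidef hAa (posSemidef_self_mul_conjTranspose Ψ))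

theorem trace_inv_mul_add_mul_inv_le {A M : Matrix n n ℝ} {Λ : Matrix k k ℝ} (hA : A.PosDef)
    (hΛ : Λ.PosSemidef) (hM : M.PosSemidef) (Ψ : Matrix n k ℝ) {a b g : ℝ} (hb : 0 < b)
    (hg : 0 < g) (hbA : b • 1 ≤ A⁻¹) (hAa : A⁻¹ ≤ a • 1) (hgΨ : g • 1 ≤ Ψᴴ * Ψ) :
    ((A + Ψ * Λ * Ψᴴ)⁻¹ * (Ψ * (Λ * Λ) * Ψᴴ + M) * (A + Ψ * Λ * Ψᴴ)⁻¹).trace ≤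
      a ^ 2 * (Ψ * Ψᴴ).trace / (b ^ 2 * g ^ 2) + a ^ 2 * M.trace := by
  have hhead := sq_smul_trace_inv_mul_sq_mul_inv_le hA hΛ Ψ hAa (mul_pos hb hg).le
    (smul_one_le_conjTranspose_mul_mul hb.le hbA hgΨ)
  rw [Matrix.mul_add, Matrix.add_mul, trace_add]
  refine add_le_add ?_ (trace_inv_add_mul_mul_inv_add_le hA hΛ Ψ hM hAa)
  rw [le_div_iff₀' (by positivity), ← mul_pow]
  exact hhead

end LowRankUpdate

end LoewnerOrder

section SortedEigenvalues

open scoped MatrixOrder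

variable {n : ℕ} {M : Matrix (Fin n) (Fin n) ℝ}

theorem eigval_of_isHermitian (hM : M.IsHermitian) {j : ℕ} (hj : j - 1 < n) :
    eigval M j = (hM.eigenvalues ∘ Tuple.sort hM.eigenvalues) (Fin.rev ⟨j - 1, hj⟩) := by
  rw [eigval, dif_pos hM, dif_pos hj]

theorem eigenvalues_le_eigval_one (hM : M.IsHermitian) (i : Fin n) :
    hM.eigenvalues i ≤ eigval M 1 := by
  have hi : (Tuple.sort hM.eigenvalues).symm i ≤ Fin.rev ⟨1 - 1, i.pos⟩ := by
    rw [Fin.le_def, Fin.val_rev]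
    dsimp only
    omega
  rw [eigval_of_isHermitian hM i.pos]
  simpa using Tuple.monotone_sort hM.eigenvalues hi

theorem eigval_last_le_eigenvalues (hM : M.IsHermitian) (i : Fin n) :
    eigval M n ≤ hM.eigenvalues i := by
  have hn : n - 1 < n := Nat.sub_one_lt_of_lt i.pos
  have hi : Fin.rev ⟨n - 1, hn⟩ ≤ (Tuple.sort hM.eigenvalues).symm i := by
    rw [Fin.le_def, Fin.val_rev]
    dsimp only
    omega
  rw [eigval_of_isHermitian hM hn]
  simpa using Tuple.monotone_sort hM.eigenvalues hi

theorem le_eigval_one_smul_one (hM : M.IsHermitian) : M ≤ eigval M 1 • 1 :=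
  le_smul_one_of_eigenvalues_le hM (eigenvalues_le_eigval_one hM)

theorem eigval_last_smul_one_le (hM : M.IsHermitian) : eigval M n • 1 ≤ M :=
  smul_one_le_of_le_eigenvalues hM (eigval_last_le_eigenvalues hM)

theorem eigval_pos (hM : M.PosDef) {j : ℕ} (hj : j - 1 < n) : 0 < eigval M j := by
  rw [eigval_of_isHermitian hM.isHermitian hj]
  exact hM.eigenvalues_pos _

end SortedEigenvalues

section KernelMatrices

variable {n : ℕ} {c : ℕ → ℝ} {ψ : ℕ → 𝒳 → ℝ} {X : Fin n → 𝒳}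

theorem kerMat_eq_kerMatGT_add (k : ℕ)
    (h : ∀ j l, Summable fun i ↦ c i * ψ i (X j) * ψ i (X l)) :
    kerMat c ψ X =
      kerMatGT c ψ k X + psiMat ψ k X * diagonal (fun i : Fin k ↦ c i) * (psiMat ψ k X)ᵀ := by
  ext j l
  rw [Matrix.add_apply, Matrix.mul_apply]
  simp only [kerMat, kerMatGT, psiMat, mul_diagonal, of_apply, transpose_apply]
  rw [← (h j l).sum_add_tsum_nat_add k, Finset.sum_range, add_comm]
  simp only [add_comm k, mul_comm (c _)]

theorem ridgeMat_eq_add (k : ℕ) (γ : ℝ)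
    (h : ∀ j l, Summable fun i ↦ c i * ψ i (X j) * ψ i (X l)) :
    ridgeMat c ψ X γ = kerMatGT c ψ k X + ((n : ℝ) * γ) • (1 : Matrix (Fin n) (Fin n) ℝ) +
      psiMat ψ k X * diagonal (fun i : Fin k ↦ c i) * (psiMat ψ k X)ᵀ := by
  rw [ridgeMat, kerMat_eq_kerMatGT_add k h, add_right_comm]

theorem sqKerMat_eq_add (k : ℕ)
    (h : ∀ j l, Summable fun i ↦ c i ^ 2 * ψ i (X j) * ψ i (X l)) :
    sqKerMat c ψ X =
      psiMat ψ k X * (diagonal (fun i : Fin k ↦ c i) * diagonal (fun i : Fin k ↦ c i)) *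
        (psiMat ψ k X)ᵀ + kerMatGT (fun i ↦ c i ^ 2) ψ k X := by
  rw [diagonal_mul_diagonal, add_comm]
  simp only [← sq]
  exact kerMat_eq_kerMatGT_add k h

theorem posSemidef_kerMatGT {k : ℕ} (hc : ∀ i, 0 ≤ c (k + i))
    (h : ∀ j l, Summable fun i ↦ c i * ψ i (X j) * ψ i (X l)) : (kerMatGT c ψ k X).PosSemidef := by
  let features (i : ℕ) : Fin n → ℝ := fun j ↦ ψ (k + i) (X j)
  have hrank_one (i : ℕ) : (c (k + i) • vecMulVec (features i) (star (features i))).PosSemidef :=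
    (posSemidef_vecMulVec_self_star _).smul (hc i)
  refine posSemidef_of_hasSum hrank_one (Pi.hasSum.mpr fun j ↦ Pi.hasSum.mpr fun l ↦ ?_)
  have htail := (summable_nat_add_iff k).mpr (h j l)
  simpa only [features, kerMatGT, Matrix.smul_apply, vecMulVec_apply, Pi.star_apply, star_trivial,
    of_apply, smul_eq_mul, mul_assoc, add_comm k] using htail.hasSum

theorem trace_kerMatGT (c : ℕ → ℝ) (ψ : ℕ → 𝒳 → ℝ) (k : ℕ) (X : Fin n → 𝒳) :
    (kerMatGT c ψ k X).trace = ∑ j, ∑' i, c (k + i) * ψ (k + i) (X j) ^ 2 := by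
  simp only [Matrix.trace, kerMatGT, diag_apply, of_apply, sq, mul_assoc]

end KernelMatrices

theorem deterministic_variance_bound_general (lam : ℕ → ℝ) (ψ : ℕ → 𝒳 → ℝ) (n k : ℕ)
    (hnn : ∀ i < k, 0 ≤ lam i) (X : Fin n → 𝒳) (γ σ : ℝ)
    (hker : ∀ j l, Summable fun i : ℕ => lam i * ψ i (X j) * ψ i (X l))
    (hsq : ∀ j l, Summable fun i : ℕ => (lam i) ^ 2 * ψ i (X j) * ψ i (X l))
    (hAk : (kerMatGT lam ψ k X + ((n : ℝ) * γ) • (1 : Matrix (Fin n) (Fin n) ℝ)).PosDef)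
    (hGram : 0 < eigval ((psiMat ψ k X)ᵀ * psiMat ψ k X) k) :
    σ ^ 2 * ((ridgeMat lam ψ X γ)⁻¹ * sqKerMat lam ψ X * (ridgeMat lam ψ X γ)⁻¹).trace ≤
      σ ^ 2 *
        ((eigval ((kerMatGT lam ψ k X +
                ((n : ℝ) * γ) • (1 : Matrix (Fin n) (Fin n) ℝ))⁻¹) 1) ^ 2 *
            (psiMat ψ k X * (psiMat ψ k X)ᵀ).trace /
            ((eigval ((kerMatGT lam ψ k X +
                ((n : ℝ) * γ) • (1 : Matrix (Fin n) (Fin n) ℝ))⁻¹) n) ^ 2 *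
              (eigval ((psiMat ψ k X)ᵀ * psiMat ψ k X) k) ^ 2) +
          (eigval ((kerMatGT lam ψ k X +
                ((n : ℝ) * γ) • (1 : Matrix (Fin n) (Fin n) ℝ))⁻¹) 1) ^ 2 *
            ∑ j, ∑' i : ℕ, (lam (k + i)) ^ 2 * (ψ (k + i) (X j)) ^ 2) := by
  obtain rfl | hn := n.eq_zero_or_pos
  · simp [Matrix.trace]
  have hinv := hAk.inv
  have hΛ : (diagonal fun i : Fin k ↦ lam i).PosSemidef := .diagonal fun i ↦ hnn i i.isLt
  have htail : (kerMatGT (fun i ↦ lam i ^ 2) ψ k X).PosSemidef :=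
    posSemidef_kerMatGT (fun i ↦ sq_nonneg _) hsq
  rw [ridgeMat_eq_add k γ hker, sqKerMat_eq_add k hsq, ← trace_kerMatGT (fun i ↦ lam i ^ 2)]
  refine mul_le_mul_of_nonneg_left ?_ (sq_nonneg σ)
  exact trace_inv_mul_add_mul_inv_le hAk hΛ htail (psiMat ψ k X) (eigval_pos hinv (by omega)) hGram
    (eigval_last_smul_one_le hinv.isHermitian) (le_eigval_one_smul_one hinv.isHermitian)
    (eigval_last_smul_one_le (isHermitian_conjTranspose_mul_self _))

theorem deterministic_variance_bound (𝒳 : Type u) (lam : ℕ → ℝ) (ψ : ℕ → 𝒳 → ℝ)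
    (hnn : ∀ i, 0 ≤ lam i) (hsum : Summable lam)
    (n k : ℕ) (hk : 1 ≤ k) (X : Fin n → 𝒳) (γ σ : ℝ) (hγ : 0 ≤ γ) (hσ : 0 ≤ σ)
    (hker : ∀ j l, Summable fun i : ℕ => lam i * ψ i (X j) * ψ i (X l))
    (hsq : ∀ j l, Summable fun i : ℕ => (lam i) ^ 2 * ψ i (X j) * ψ i (X l))
    (hAk : (kerMatGT lam ψ k X + ((n : ℝ) * γ) • (1 : Matrix (Fin n) (Fin n) ℝ)).PosDef)
    (hGram : 0 < eigval ((psiMat ψ k X)ᵀ * psiMat ψ k X) k) :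
    σ ^ 2 * ((ridgeMat lam ψ X γ)⁻¹ * sqKerMat lam ψ X * (ridgeMat lam ψ X γ)⁻¹).trace ≤
      σ ^ 2 *
        ((eigval ((kerMatGT lam ψ k X +
                ((n : ℝ) * γ) • (1 : Matrix (Fin n) (Fin n) ℝ))⁻¹) 1) ^ 2 *
            (psiMat ψ k X * (psiMat ψ k X)ᵀ).trace /
            ((eigval ((kerMatGT lam ψ k X +
                ((n : ℝ) * γ) • (1 : Matrix (Fin n) (Fin n) ℝ))⁻¹) n) ^ 2 *
              (eigval ((psiMat ψ k X)ᵀ * psiMat ψ k X) k) ^ 2) +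
          (eigval ((kerMatGT lam ψ k X +
                ((n : ℝ) * γ) • (1 : Matrix (Fin n) (Fin n) ℝ))⁻¹) 1) ^ 2 *
            ∑ j, ∑' i : ℕ, (lam (k + i)) ^ 2 * (ψ (k + i) (X j)) ^ 2) := by
  exact deterministic_variance_bound_general lam ψ n k (fun i _ ↦ hnn i) X γ σ hker hsq hAk hGram

end KRRPaper

end
end

section
/- Divergence of eigenfunction moments for the Gaussian kernel with Gaussian inputs. Let H_i denote the i-th physicists' Hermite polynomial, H_i(x) = (−1)^i·e^{x²}·(dⁱ/dxⁱ)e^{−x²}, and define ψ_i(x) := 2^{1/4}·(2^i·i!)^{−1/2}·e^{−x²/4}·H_i(x) (these are the Mercer eigenfunctions of the RBF kernel K(x,y) = exp(−(3/8)(x−y)²) with standard Gaussian inputs). Then for every real p ≥ 3 there exist a constant c > 0 and i₀ ∈ ℕ such that for all i ≥ i₀: ∫_ℝ |ψ_i(x)|^p · (2π)^{−1/2}·e^{−x²/2} dx ≥ c·exp((p−2)·i/4). In particular, for each fixed p ≥ 3 the moments (E_{x∼N(0,1)}[|ψ_i(x)|^p])^{1/p} tend to infinity as i → ∞, so the sequence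 (ψ_i) is not uniformly sub-Gaussian. -/
open MeasureTheory Matrix Filter

noncomputable section

namespace KRRPaper

universe u

variable {𝒳 : Type u}

/-- the `i`-th physicists' Hermite polynomial `H_i(x) = (-1)^i e^{x²} (d/dx)^i e^{-x²}` -/
def physHermite (i : ℕ) (x : ℝ) : ℝ :=
  (-1 : ℝ) ^ i * Real.exp (x ^ 2) * iteratedDeriv i (fun t : ℝ => Real.exp (-t ^ 2)) x

/-- the Mercer eigenfunctions of the RBF kernel `exp(-(3/8)(x-y)²)` with standard
Gaussian inputs -/
def psiRBF (i : ℕ) (x : ℝ) : ℝ :=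
  (2 : ℝ) ^ ((1 : ℝ) / 4) / Real.sqrt ((2 : ℝ) ^ i * (Nat.factorial i : ℝ)) *
    Real.exp (-x ^ 2 / 4) * physHermite i x

/-!
Pair `ψ_i` in `L²(N(0,1))` with `exp (s x - x² / 4)`. Integrating by parts `i` times gives a
multiple of `s ^ i * exp (s² / 4) / √(2 ^ i * i!)`. Hölder's inequality, with the explicit Gaussian
`L^q` norm of the test function, then bounds `‖ψ_i‖_p` below by a multiple of
`s ^ i * exp (-s² / (4ρ)) / √(2 ^ i * i!)`, where `ρ = (3p - 2) / (p + 2)`. At the best choice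
`s² = 2iρ`, Stirling's formula turns this into a multiple of `√(ρ ^ i / √i)`. Finally
`log ρ ≥ 1 - 1 / ρ > (p - 2) / (2p)` for `p > 2`, and the strict inequality absorbs `√i`.
-/

section

open Real ProbabilityTheory Polynomial

theorem integral_exp_mul_iteratedDeriv {f : ℝ → ℝ} {b : ℝ} {n : ℕ} (hf : ContDiff ℝ n f)
    (hint : ∀ k ≤ n, Integrable fun x => exp (b * x) * iteratedDeriv k f x) :
    ∫ x, exp (b * x) * iteratedDeriv n f x = (-b) ^ n * ∫ x, exp (b * x) * f x := by
  induction n with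
  | zero => simp
  | succ n ih =>
    have hexp (x : ℝ) : HasDerivAt (fun y => exp (b * y)) (b * exp (b * x)) x := by
      simpa [mul_comm] using ((hasDerivAt_id x).const_mul b).exp
    have hderiv (x : ℝ) : HasDerivAt (iteratedDeriv n f) (iteratedDeriv (n + 1) f x) x := by
      rw [iteratedDeriv_succ]
      exact (hf.differentiable_iteratedDeriv n (by exact_mod_cast n.lt_succ_self) x).hasDerivAt
    have hn : Integrable fun x => b * exp (b * x) * iteratedDeriv n f x := by
      simpa only [mul_assoc] using (hint n n.le_succ).const_mul b
    calc ∫ x, exp (b * x) * iteratedDeriv (n + 1) f x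
        = -∫ x, b * exp (b * x) * iteratedDeriv n f x :=
          integral_mul_deriv_eq_deriv_mul_of_integrable (fun x _ => hexp x) (fun x _ => hderiv x)
            (hint _ le_rfl) hn (hint n n.le_succ)
      _ = -b * ∫ x, exp (b * x) * iteratedDeriv n f x := by
          simp only [mul_assoc, integral_const_mul, neg_mul]
      _ = (-b) ^ (n + 1) * ∫ x, exp (b * x) * f x := by
          rw [ih (hf.of_le (by exact_mod_cast n.le_succ)) fun k hk => hint k (hk.trans n.le_succ),
            pow_succ', mul_assoc]

theorem exp_neg_mul_sq_add_mul {a : ℝ} (ha : a ≠ 0) (b x : ℝ) :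
    exp (-a * x ^ 2 + b * x) = exp (b ^ 2 / (4 * a)) * exp (-a * (x - b / (2 * a)) ^ 2) := by
  rw [← exp_add]
  congr 1
  field_simp
  ring

theorem integrable_exp_neg_mul_sq_add_mul {a : ℝ} (ha : 0 < a) (b : ℝ) :
    Integrable fun x : ℝ => exp (-a * x ^ 2 + b * x) := by
  simp only [exp_neg_mul_sq_add_mul ha.ne']
  exact ((integrable_exp_neg_mul_sq ha).comp_sub_right _).const_mul _

theorem integral_exp_neg_mul_sq_add_mul {a : ℝ} (ha : a ≠ 0) (b : ℝ) :
    ∫ x : ℝ, exp (-a * x ^ 2 + b * x) = √(π / a) * exp (b ^ 2 / (4 * a)) := by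
  simp only [exp_neg_mul_sq_add_mul ha]
  rw [integral_const_mul, integral_sub_right_eq_self (fun y : ℝ => exp (-a * y ^ 2)),
    integral_gaussian, mul_comm]

theorem exists_abs_eval_le_mul_exp_mul_sq (P : ℝ[X]) {δ : ℝ} (hδ : 0 < δ) :
    ∃ C : ℝ, ∀ x : ℝ, |P.eval x| ≤ C * exp (δ * x ^ 2) := by
  induction P using Polynomial.induction_on' with
  | add P Q hP hQ =>
    obtain ⟨C, hC⟩ := hP
    obtain ⟨D, hD⟩ := hQ
    refine ⟨C + D, fun x => ?_⟩
    rw [eval_add, add_mul]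
    exact (abs_add_le _ _).trans (add_le_add (hC x) (hD x))
  | monomial n a =>
    refine ⟨|a| * (n.factorial * exp (1 / (4 * δ))), fun x => ?_⟩
    have habs : |x| ≤ 1 / (4 * δ) + δ * x ^ 2 := by
      have hsq : 1 / (4 * δ) + δ * x ^ 2 - |x| = δ * (|x| - 1 / (2 * δ)) ^ 2 := by
        rw [← sq_abs x]
        field_simp
        ring
      have : 0 ≤ δ * (|x| - 1 / (2 * δ)) ^ 2 := by positivity
      linarith
    calc |(monomial n a).eval x| = |a| * |x| ^ n := by rw [eval_monomial, abs_mul, abs_pow]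
      _ ≤ |a| * (n.factorial * exp |x|) := by
          gcongr
          rw [← div_le_iff₀' (by positivity)]
          exact pow_div_factorial_le_exp |x| (abs_nonneg x) n
      _ ≤ |a| * (n.factorial * exp (1 / (4 * δ) + δ * x ^ 2)) := by gcongr
      _ = |a| * (n.factorial * exp (1 / (4 * δ))) * exp (δ * x ^ 2) := by rw [exp_add]; ring

theorem integrable_eval_mul_exp_neg_mul_sq_add_mul (P : ℝ[X]) {a : ℝ} (ha : 0 < a) (b : ℝ) :
    Integrable fun x : ℝ => P.eval x * exp (-a * x ^ 2 + b * x) := by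
  obtain ⟨C, hC⟩ := exists_abs_eval_le_mul_exp_mul_sq P (half_pos ha)
  refine ((integrable_exp_neg_mul_sq_add_mul (half_pos ha) b).const_mul C).mono'
    (Continuous.aestronglyMeasurable (by fun_prop)) (Eventually.of_forall fun x => ?_)
  calc ‖P.eval x * exp (-a * x ^ 2 + b * x)‖ = |P.eval x| * exp (-a * x ^ 2 + b * x) := by
        rw [norm_eq_abs, abs_mul, abs_exp]
    _ ≤ C * exp (a / 2 * x ^ 2) * exp (-a * x ^ 2 + b * x) := by gcongr; exact hC x
    _ = C * exp (-(a / 2) * x ^ 2 + b * x) := by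
        rw [mul_assoc, ← exp_add]
        ring_nf

theorem iteratedDeriv_exp_neg_sq (n : ℕ) (x : ℝ) :
    iteratedDeriv n (fun t : ℝ => exp (-t ^ 2)) x =
      (-1) ^ n * (physHermite n x * exp (-x ^ 2)) := by
  have hsign : (-1 : ℝ) ^ n * (-1) ^ n = 1 := by rw [← mul_pow]; norm_num
  have hcancel : exp (x ^ 2) * exp (-x ^ 2) = 1 := by rw [← exp_add, add_neg_cancel, exp_zero]
  rw [physHermite]
  linear_combination -iteratedDeriv n (fun t : ℝ => exp (-t ^ 2)) x *
    (hsign * (exp (x ^ 2) * exp (-x ^ 2)) + hcancel)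

theorem physHermite_eq_hermite (n : ℕ) (x : ℝ) :
    physHermite n x = √2 ^ n * aeval (√2 * x) (hermite n) := by
  have hscale : (fun t : ℝ => exp (-t ^ 2)) = fun t => exp (-((√2 * t) ^ 2 / 2)) := by
    funext t
    rw [mul_pow, sq_sqrt zero_le_two, mul_div_cancel_left₀ _ two_ne_zero]
  have hcontDiff : ContDiff ℝ n fun y : ℝ => exp (-(y ^ 2 / 2)) := by fun_prop
  have hderiv := iteratedDeriv_exp_neg_sq n x
  rw [hscale, iteratedDeriv_comp_const_mul hcontDiff, iteratedDeriv_eq_iterate] at hderiv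
  beta_reduce at hderiv
  rw [deriv_gaussian_eq_hermite_mul_gaussian, ← congrFun hscale x] at hderiv
  have hne : (-1) ^ n * exp (-x ^ 2) ≠ 0 :=
    mul_ne_zero (pow_ne_zero n (by norm_num)) (exp_ne_zero _)
  exact mul_right_cancel₀ hne (by linear_combination -hderiv)

theorem exists_physHermite_eq_eval (n : ℕ) : ∃ P : ℝ[X], physHermite n = fun x => P.eval x := by
  refine ⟨C (√2 ^ n) * ((hermite n).map (Int.castRingHom ℝ)).comp (C √2 * X), funext fun x => ?_⟩
  simp [physHermite_eq_hermite, aeval_def, eval_map]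

theorem integrable_exp_mul_physHermite_mul_exp_neg_sq (b : ℝ) (n : ℕ) :
    Integrable fun x => exp (b * x) * (physHermite n x * exp (-x ^ 2)) := by
  obtain ⟨P, hP⟩ := exists_physHermite_eq_eval n
  refine (integrable_eval_mul_exp_neg_mul_sq_add_mul P one_pos b).congr
    (Eventually.of_forall fun x => ?_)
  simp only [hP, exp_add, neg_mul, one_mul]
  ring

theorem integral_exp_mul_physHermite_mul_exp_neg_sq (b : ℝ) (n : ℕ) :
    ∫ x, exp (b * x) * (physHermite n x * exp (-x ^ 2)) = b ^ n * (√π * exp (b ^ 2 / 4)) := by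
  have hcontDiff : ContDiff ℝ n fun t : ℝ => exp (-t ^ 2) := by fun_prop
  have hparts := integral_exp_mul_iteratedDeriv (b := b) hcontDiff fun k _ => by
    simpa only [iteratedDeriv_exp_neg_sq, mul_left_comm] using
      (integrable_exp_mul_physHermite_mul_exp_neg_sq b k).const_mul ((-1) ^ k)
  have hgauss : ∫ x : ℝ, exp (b * x) * exp (-x ^ 2) = √π * exp (b ^ 2 / 4) := by
    simpa [← exp_add, add_comm] using integral_exp_neg_mul_sq_add_mul one_ne_zero b
  simp only [iteratedDeriv_exp_neg_sq, mul_left_comm _ ((-1 : ℝ) ^ n), integral_const_mul,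
    hgauss, neg_pow b, mul_assoc] at hparts
  exact mul_left_cancel₀ (pow_ne_zero n (by norm_num)) hparts

theorem gaussianPDFReal_zero_one (x : ℝ) :
    gaussianPDFReal 0 1 x = (√(2 * π))⁻¹ * exp (-x ^ 2 / 2) := by
  simp [gaussianPDFReal]

theorem integral_gaussianReal_zero_one (f : ℝ → ℝ) :
    ∫ x, f x ∂gaussianReal 0 1 = ∫ x, f x * ((2 * π) ^ (-(1 : ℝ) / 2) * exp (-x ^ 2 / 2)) := by
  have hconst : (√(2 * π))⁻¹ = (2 * π) ^ (-(1 : ℝ) / 2) := by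
    rw [sqrt_eq_rpow, ← rpow_neg (by positivity), neg_div]
  rw [integral_gaussianReal_eq_integral_smul one_ne_zero]
  simp only [gaussianPDFReal_zero_one, hconst, smul_eq_mul, mul_comm (f _)]

theorem continuous_psiRBF (i : ℕ) : Continuous (psiRBF i) := by
  obtain ⟨P, hP⟩ := exists_physHermite_eq_eval i
  unfold psiRBF
  rw [hP]
  fun_prop

theorem exists_abs_psiRBF_le (i : ℕ) : ∃ C : ℝ, ∀ x, |psiRBF i x| ≤ C := by
  obtain ⟨P, hP⟩ := exists_physHermite_eq_eval i
  obtain ⟨C, hC⟩ := exists_abs_eval_le_mul_exp_mul_sq P (δ := 1 / 4) (by norm_num)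
  set K := (2 : ℝ) ^ ((1 : ℝ) / 4) / √((2 : ℝ) ^ i * i.factorial) with hK
  refine ⟨|K| * C, fun x => ?_⟩
  calc |psiRBF i x| = |K| * (exp (-x ^ 2 / 4) * |P.eval x|) := by
        rw [psiRBF, ← hK, hP, abs_mul, abs_mul, abs_exp, mul_assoc]
    _ ≤ |K| * (exp (-x ^ 2 / 4) * (C * exp (1 / 4 * x ^ 2))) := by gcongr; exact hC x
    _ = |K| * C := by
        rw [mul_left_comm (exp _), ← exp_add]
        ring_nf
        simp

theorem memLp_psiRBF (i : ℕ) (p : ENNReal) : MemLp (psiRBF i) p (gaussianReal 0 1) := by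
  obtain ⟨C, hC⟩ := exists_abs_psiRBF_le i
  exact .of_bound (continuous_psiRBF i).aestronglyMeasurable C (Eventually.of_forall hC)

/-- The test function `x ↦ exp (s x - x² / 4)`, paired with `psiRBF` to bound its `Lᵖ` norms from
below. The factor `exp (-x² / 4)` makes the pairing against the standard Gaussian an integral of
`physHermite` against its own weight `exp (-x²)`. -/
def expTest (s x : ℝ) : ℝ := exp (s * x - x ^ 2 / 4)

theorem continuous_expTest (s : ℝ) : Continuous (expTest s) := by
  unfold expTest
  fun_prop

theorem integral_psiRBF_mul_expTest (i : ℕ) (s : ℝ) :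
    ∫ x, psiRBF i x * expTest s x ∂gaussianReal 0 1 =
      2 ^ (-(1 : ℝ) / 4) * (s ^ i / √(2 ^ i * i.factorial) * exp (s ^ 2 / 4)) := by
  set K := (2 : ℝ) ^ ((1 : ℝ) / 4) / √((2 : ℝ) ^ i * i.factorial) with hK
  have hintegrand (x : ℝ) : gaussianPDFReal 0 1 x • (psiRBF i x * expTest s x) =
      (√(2 * π))⁻¹ * K * (exp (s * x) * (physHermite i x * exp (-x ^ 2))) := by
    have hexp : exp (-x ^ 2 / 2) * exp (-x ^ 2 / 4) * exp (s * x - x ^ 2 / 4) =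
        exp (s * x) * exp (-x ^ 2) := by
      simp only [← exp_add]
      ring_nf
    rw [gaussianPDFReal_zero_one, psiRBF, expTest, ← hK, smul_eq_mul]
    linear_combination (√(2 * π))⁻¹ * K * physHermite i x * hexp
  have hroot : (2 : ℝ) ^ ((1 : ℝ) / 4) / √2 = 2 ^ (-(1 : ℝ) / 4) := by
    rw [sqrt_eq_rpow, ← rpow_sub two_pos]
    norm_num
  simp only [integral_gaussianReal_eq_integral_smul one_ne_zero, hintegrand, integral_const_mul,
    integral_exp_mul_physHermite_mul_exp_neg_sq]
  rw [← hroot, sqrt_mul zero_le_two, hK]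
  field_simp

theorem gaussianPDFReal_smul_expTest_rpow (q s x : ℝ) :
    gaussianPDFReal 0 1 x • expTest s x ^ q =
      (√(2 * π))⁻¹ * exp (-((q + 2) / 4) * x ^ 2 + s * q * x) := by
  rw [gaussianPDFReal_zero_one, expTest, ← exp_mul, smul_eq_mul, mul_assoc, ← exp_add]
  ring_nf

theorem integral_expTest_rpow {q : ℝ} (hq : 0 < q) (s : ℝ) :
    ∫ x, expTest s x ^ q ∂gaussianReal 0 1 =
      √(2 / (q + 2)) * exp (q ^ 2 * s ^ 2 / (q + 2)) := by
  simp only [integral_gaussianReal_eq_integral_smul one_ne_zero, gaussianPDFReal_smul_expTest_rpow,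
    integral_const_mul]
  rw [integral_exp_neg_mul_sq_add_mul (by positivity), ← mul_assoc, ← sqrt_inv,
    ← sqrt_mul (by positivity)]
  congr 2 <;> field_simp
  norm_num

theorem memLp_expTest {q : ℝ} (hq : 0 < q) (s : ℝ) :
    MemLp (expTest s) (ENNReal.ofReal q) (gaussianReal 0 1) := by
  rw [← integrable_norm_rpow_iff (continuous_expTest s).aestronglyMeasurable
    (ENNReal.ofReal_pos.2 hq).ne' ENNReal.ofReal_ne_top, ENNReal.toReal_ofReal hq.le,
    gaussianReal_of_var_ne_zero 0 one_ne_zero,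
    integrable_withDensity_iff_integrable_smul' (measurable_gaussianPDF 0 1)
      (Eventually.of_forall fun _ => gaussianPDF_lt_top)]
  have hnorm (x : ℝ) : ‖expTest s x‖ = expTest s x := abs_exp _
  simp only [toReal_gaussianPDF, hnorm, gaussianPDFReal_smul_expTest_rpow]
  exact (integrable_exp_neg_mul_sq_add_mul (by positivity) _).const_mul _

theorem integral_mul_le_Lp_abs_mul_Lq {α : Type*} [MeasurableSpace α] {μ : Measure α} {p q : ℝ}
    (hpq : p.HolderConjugate q) {f g : α → ℝ} (hg0 : 0 ≤ g) (hf : MemLp f (ENNReal.ofReal p) μ)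
    (hg : MemLp g (ENNReal.ofReal q) μ) :
    ∫ x, f x * g x ∂μ ≤ (∫ x, |f x| ^ p ∂μ) ^ (1 / p) * (∫ x, g x ^ q ∂μ) ^ (1 / q) := by
  have : ENNReal.HolderConjugate (ENNReal.ofReal p) (ENNReal.ofReal q) := hpq.ennrealOfReal
  calc ∫ x, f x * g x ∂μ ≤ ∫ x, |f x| * g x ∂μ :=
        integral_mono (hf.integrable_mul hg) (hf.abs.integrable_mul hg) fun x =>
          mul_le_mul_of_nonneg_right (le_abs_self _) (hg0 x)
    _ ≤ _ := integral_mul_le_Lp_mul_Lq_of_nonneg hpq (Eventually.of_forall fun x => abs_nonneg _)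
        (Eventually.of_forall hg0) hf.abs hg

/-- The growth rate `ρ` for which `(𝔼 |ψ_i|ᵖ) ^ (1 / p)` is bounded below by a multiple of
`√(ρ ^ i / √i)`, with `ψ = psiRBF`. -/
def momentRate (p : ℝ) : ℝ := (3 * p - 2) / (p + 2)

theorem momentRate_pos {p : ℝ} (hp : 1 < p) : 0 < momentRate p :=
  div_pos (by linarith) (by linarith)

theorem exp_lt_momentRate {p : ℝ} (hp : 2 < p) : exp ((p - 2) / (2 * p)) < momentRate p := by
  have hrate := momentRate_pos (one_lt_two.trans hp)
  rw [← lt_log_iff_exp_lt hrate]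
  refine lt_of_lt_of_le ?_ (one_sub_inv_le_log_of_pos hrate)
  have h3p : 0 < 3 * p - 2 := by linarith
  have hinv : 1 - (momentRate p)⁻¹ = 2 * (p - 2) / (3 * p - 2) := by
    rw [momentRate, inv_div, one_sub_div h3p.ne']
    ring
  rw [hinv, div_lt_div_iff₀ (by positivity) h3p]
  nlinarith

theorem exists_mul_le_rpow_integral_abs_psiRBF {p : ℝ} (hp : 1 < p) :
    ∃ c > 0, ∀ (i : ℕ) (s : ℝ),
      c * (s ^ i / √(2 ^ i * i.factorial) * exp (-s ^ 2 / (4 * momentRate p))) ≤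
        (∫ x, |psiRBF i x| ^ p ∂gaussianReal 0 1) ^ (1 / p) := by
  have hpq := HolderConjugate.conjExponent hp
  set q := p.conjExponent with hq
  have hq0 : 0 < q := hpq.symm.pos
  set B := √(2 / (q + 2)) ^ (1 / q) with hB
  have hBpos : 0 < B := by positivity
  refine ⟨2 ^ (-(1 : ℝ) / 4) / B, by positivity, fun i s => ?_⟩
  have hnorm : (∫ x, expTest s x ^ q ∂gaussianReal 0 1) ^ (1 / q) =
      B * exp (q * s ^ 2 / (q + 2)) := by
    rw [integral_expTest_rpow hq0, mul_rpow (sqrt_nonneg _) (exp_pos _).le, ← exp_mul, ← hB]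
    field_simp
  have hexp : exp (-s ^ 2 / (4 * momentRate p)) * exp (q * s ^ 2 / (q + 2)) = exp (s ^ 2 / 4) := by
    have h3p : 3 * p - 2 ≠ 0 := by linarith
    have hp1 : p - 1 ≠ 0 := by linarith
    have hq2 : q + 2 = (3 * p - 2) / (p - 1) := by
      rw [hq, conjExponent]
      field_simp
      ring
    rw [← exp_add, hq2, hq, conjExponent, momentRate]
    congr 1
    field_simp
    ring
  have hholder := integral_mul_le_Lp_abs_mul_Lq (g := expTest s) hpq
    (fun x => (exp_pos _).le) (memLp_psiRBF i _) (memLp_expTest hq0 s)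
  rw [integral_psiRBF_mul_expTest, hnorm, ← hexp] at hholder
  refine le_of_mul_le_mul_right (le_of_eq_of_le ?_ hholder)
    (mul_pos hBpos (exp_pos (q * s ^ 2 / (q + 2))))
  field_simp

theorem factorial_le_exp_one_mul_sqrt_mul_pow {n : ℕ} (hn : n ≠ 0) :
    (n.factorial : ℝ) ≤ exp 1 * √n * (n / exp 1) ^ n := by
  obtain ⟨k, rfl⟩ := Nat.exists_eq_succ_of_ne_zero hn
  have hanti := Stirling.stirlingSeq'_antitone k.zero_le
  simp only [Function.comp_apply, Nat.succ_eq_add_one, zero_add,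
    Stirling.stirlingSeq_one] at hanti
  rw [Stirling.stirlingSeq, div_le_iff₀ (by positivity), sqrt_mul zero_le_two] at hanti
  refine hanti.trans_eq ?_
  field_simp

/-- `√(2 * n * ρ)` is the maximiser of `s ↦ s ^ n * exp (-s ^ 2 / (4 * ρ))` on `0 ≤ s`. -/
theorem pow_div_sqrt_mul_exp_at_max {ρ : ℝ} (hρ : 0 < ρ) (n : ℕ) :
    √(2 * n * ρ) ^ n / √(2 ^ n * n.factorial) * exp (-√(2 * n * ρ) ^ 2 / (4 * ρ)) =
      √(ρ ^ n * ((n / exp 1) ^ n / n.factorial)) := by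
  have hexp : exp (-√(2 * n * ρ) ^ 2 / (4 * ρ)) = √((exp 1 ^ n)⁻¹) := by
    rw [sq_sqrt (by positivity), ← exp_nat_mul, ← exp_neg, sqrt_eq_rpow, ← exp_mul]
    congr 1
    field_simp
    ring
  have hpow : √(2 * n * ρ) ^ n = √((2 * n * ρ) ^ n) := by
    rw [← sqrt_sq (pow_nonneg (sqrt_nonneg _) n), pow_right_comm, sq_sqrt (by positivity)]
  rw [hexp, hpow, ← sqrt_div (by positivity), ← sqrt_mul (by positivity)]
  congr 1
  rw [mul_pow, mul_pow, div_pow]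
  field_simp

theorem exists_mul_sqrt_momentRate_pow_le {p : ℝ} (hp : 1 < p) :
    ∃ c > 0, ∀ i : ℕ, i ≠ 0 →
      c * √(momentRate p ^ i / √i) ≤ (∫ x, |psiRBF i x| ^ p ∂gaussianReal 0 1) ^ (1 / p) := by
  obtain ⟨c, hc, hlower⟩ := exists_mul_le_rpow_integral_abs_psiRBF hp
  have hρ := momentRate_pos hp
  refine ⟨c * √(exp 1)⁻¹, by positivity, fun i hi => ?_⟩
  have hstirling : (exp 1)⁻¹ / √i ≤ (i / exp 1) ^ i / i.factorial := by
    rw [le_div_iff₀ (by positivity)]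
    calc (exp 1)⁻¹ / √i * i.factorial
        ≤ (exp 1)⁻¹ / √i * (exp 1 * √i * (i / exp 1) ^ i) := by
          gcongr
          exact factorial_le_exp_one_mul_sqrt_mul_pow hi
      _ = (i / exp 1) ^ i := by field_simp
  calc c * √(exp 1)⁻¹ * √(momentRate p ^ i / √i)
      = c * √(momentRate p ^ i * ((exp 1)⁻¹ / √i)) := by
        rw [mul_assoc, ← sqrt_mul (by positivity)]
        ring_nf
    _ ≤ c * √(momentRate p ^ i * ((i / exp 1) ^ i / i.factorial)) := by gcongr
    _ ≤ _ := by
        rw [← pow_div_sqrt_mul_exp_at_max hρ]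
        exact hlower i _

theorem eventually_pow_le_pow_div_sqrt {a b : ℝ} (ha : 0 < a) (hab : a < b) :
    ∀ᶠ n : ℕ in atTop, a ^ n ≤ b ^ n / √n := by
  have hratio := tendsto_pow_const_div_const_pow_of_one_lt 1 ((one_lt_div ha).2 hab)
  filter_upwards [hratio.eventually_le_const one_pos, eventually_ge_atTop 1] with n hn hn1
  have hn1' : (1 : ℝ) ≤ n := by exact_mod_cast hn1
  have hb : 0 < b := ha.trans hab
  rw [pow_one, div_pow, div_le_one (by positivity), le_div_iff₀' (by positivity)] at hn
  rw [le_div_iff₀' (by positivity), mul_comm]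
  calc a ^ n * √n ≤ a ^ n * n := by
        gcongr
        exact sqrt_le_self_iff.2 (Or.inr hn1')
    _ ≤ b ^ n := hn

theorem exists_eventually_mul_exp_le {p : ℝ} (hp : 2 < p) :
    ∃ c > 0, ∀ᶠ i : ℕ in atTop, c * exp ((p - 2) * i / (4 * p)) ≤
      (∫ x, |psiRBF i x| ^ p ∂gaussianReal 0 1) ^ (1 / p) := by
  obtain ⟨c, hc, hlower⟩ := exists_mul_sqrt_momentRate_pow_le (one_lt_two.trans hp)
  refine ⟨c, hc, ?_⟩
  filter_upwards [eventually_pow_le_pow_div_sqrt (exp_pos _) (exp_lt_momentRate hp),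
    eventually_ne_atTop 0] with i hrate hi
  calc c * exp ((p - 2) * i / (4 * p)) = c * √(exp ((p - 2) / (2 * p)) ^ i) := by
        rw [← exp_nat_mul, ← exp_half]
        ring_nf
    _ ≤ c * √(momentRate p ^ i / √i) := by gcongr
    _ ≤ _ := hlower i hi

theorem rbf_moments_diverge_general {p : ℝ} (hp : 2 < p) :
    (∃ c : ℝ, 0 < c ∧ ∃ i₀ : ℕ, ∀ i : ℕ, i₀ ≤ i →
        c * exp ((p - 2) * i / 4) ≤
          ∫ x : ℝ, |psiRBF i x| ^ p * ((2 * π) ^ (-(1 : ℝ) / 2) * exp (-x ^ 2 / 2))) ∧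
      Tendsto (fun i : ℕ =>
          (∫ x : ℝ, |psiRBF i x| ^ p *
            ((2 * π) ^ (-(1 : ℝ) / 2) * exp (-x ^ 2 / 2))) ^ (1 / p))
        atTop atTop := by
  have hp0 : 0 < p := two_pos.trans hp
  obtain ⟨c, hc, hlower⟩ := exists_eventually_mul_exp_le hp
  simp only [← integral_gaussianReal_zero_one]
  constructor
  · obtain ⟨i₀, hi₀⟩ := eventually_atTop.1 hlower
    refine ⟨c ^ p, by positivity, i₀, fun i hi => ?_⟩
    calc c ^ p * exp ((p - 2) * i / 4) = (c * exp ((p - 2) * i / (4 * p))) ^ p := by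
          rw [mul_rpow hc.le (exp_pos _).le, ← exp_mul]
          field_simp
      _ ≤ ∫ x, |psiRBF i x| ^ p ∂gaussianReal 0 1 := by
          rw [← le_rpow_inv_iff_of_pos (by positivity)
            (integral_nonneg fun x => by positivity) hp0, ← one_div]
          exact hi₀ i hi
  · refine tendsto_atTop_mono' atTop hlower ((tendsto_exp_atTop.comp ?_).const_mul_atTop hc)
    have hslope : 0 < (p - 2) / (4 * p) := div_pos (by linarith) (by positivity)
    exact (tendsto_natCast_atTop_atTop.const_mul_atTop hslope).congr fun i => by ring

end

theorem rbf_moments_diverge (p : ℝ) (hp : 3 ≤ p) :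
    (∃ c : ℝ, 0 < c ∧ ∃ i₀ : ℕ, ∀ i : ℕ, i₀ ≤ i →
        c * Real.exp ((p - 2) * i / 4) ≤
          ∫ x : ℝ, |psiRBF i x| ^ p *
            ((2 * Real.pi) ^ (-(1 : ℝ) / 2) * Real.exp (-x ^ 2 / 2))) ∧
      Tendsto (fun i : ℕ =>
          (∫ x : ℝ, |psiRBF i x| ^ p *
            ((2 * Real.pi) ^ (-(1 : ℝ) / 2) * Real.exp (-x ^ 2 / 2))) ^ (1 / p))
        atTop atTop :=
  rbf_moments_diverge_general (by linarith)

end KRRPaper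

end
end
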